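/- For every real number q with 0 < q < 1, ∫_0^q ∏_{j=1}^∞ (1−t^j)^8 (1−t^{6j})^6 / (1−t^{2j})^{10} dt = q ∏_{j=1}^∞ (1−q^j)^4 (1−q^{6j})^8 / ((1−q^{2j})^8 (1−q^{3j})^4). Moreover this common value equals (√2 − 1)^2/3 when q = e^{−2π/√6}, equals (2 − √3)^2/3 when q = e^{−2π/√3}, and equals (√6 − 2)^2/18 when q = e^{−2π/√2}. -/

import Mathlib

open Real

/-- The integrand `∏_{j=1}^∞ (1−t^j)^8 (1−t^{6j})^6 / (1−t^{2j})^{10}`. -/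
noncomputable def U2 (t : ℝ) : ℝ :=
  ∏' j : ℕ, (1 - t ^ (j + 1)) ^ 8 * (1 - t ^ (6 * (j + 1))) ^ 6 / (1 - t ^ (2 * (j + 1))) ^ 10

/-- The antiderivative `q ∏_{j=1}^∞ (1−q^j)^4 (1−q^{6j})^8 / ((1−q^{2j})^8 (1−q^{3j})^4)`. -/
noncomputable def V2 (q : ℝ) : ℝ :=
  q * ∏' j : ℕ, (1 - q ^ (j + 1)) ^ 4 * (1 - q ^ (6 * (j + 1))) ^ 8 /
    ((1 - q ^ (2 * (j + 1))) ^ 8 * (1 - q ^ (3 * (j + 1))) ^ 4)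

/-!
Write `q = exp (-2t)`. The Jacobi triple product turns `V2 q` into `s(t)²` with `s(t) = θ₂(3t)² /
θ₂(t)²`, and `q U2(q) / V2(q)` into `θ₃(t) θ₄(t) θ₃(3t) θ₄(3t)`, so the integral formula is a
differential equation for `s`. The classical identity `θ₃(t) θ₃(3t) = θ₂(t) θ₂(3t) + θ₄(t) θ₄(3t)`
of degree three makes the moduli at `t` and `3t` rational functions of one parameter `p`.
Differentiating this parametrisation, with `(log (θ₂ / θ₃))' = -θ₄⁴ / 4` at both `t` and `3t`,
computes `θ₄(3t)² / θ₄(t)²` in terms of `p`; then `s = p / (2 + p)` and its derivative follow. At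
`t = π / √n` the modular inversion `t ↦ π² / t` relates theta constants at `t` and `n t`, which for
`n = 2, 3, 6` yields an algebraic equation for `s`.
-/

open Filter Topology

/-! ### The Jacobi triple product -/

section TripleProduct

variable {𝕜 : Type*} [NormedField 𝕜] {q x y : 𝕜}

/-- The finite `q`-factorial `(q; q)_n = ∏_{i=1}^n (1 - q^i)`. -/
def qPochhammer (q : 𝕜) (n : ℕ) : 𝕜 := ∏ i ∈ Finset.range n, (1 - q ^ (i + 1))

/-- Euler's function `(q; q)_∞ = ∏_{i ≥ 1} (1 - q^i)`. -/
noncomputable def eulerFunction (q : 𝕜) : 𝕜 := ∏' i : ℕ, (1 - q ^ (i + 1))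

/-- The reciprocal `1 / (q; q)_n`, extended by zero to negative integers `n`, so that the
`q`-binomial coefficients vanish outside their range. -/
noncomputable def invQPochhammer (q : 𝕜) : ℤ → 𝕜
  | .ofNat n => (qPochhammer q n)⁻¹
  | .negSucc _ => 0

/-- The central Gaussian binomial coefficient `[2N, N + k]_q`, indexed by the offset `k` from the
middle. -/
noncomputable def centeredQBinom (q : 𝕜) (N : ℕ) (k : ℤ) : 𝕜 :=
  qPochhammer q (2 * N) * invQPochhammer q (N - k) * invQPochhammer q (N + k)

lemma norm_pow_lt_one (hq : ‖q‖ < 1) {n : ℕ} (hn : n ≠ 0) : ‖q ^ n‖ < 1 := by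
  rw [norm_pow]
  exact pow_lt_one₀ (norm_nonneg q) hq hn

lemma one_sub_pow_succ_ne_zero (hq : ‖q‖ < 1) (n : ℕ) : 1 - q ^ (n + 1) ≠ 0 := by
  intro h
  refine (norm_pow_lt_one hq n.succ_ne_zero).ne ?_
  rw [← sub_eq_zero.1 h, norm_one]

lemma qPochhammer_succ (q : 𝕜) (n : ℕ) :
    qPochhammer q (n + 1) = qPochhammer q n * (1 - q ^ (n + 1)) :=
  Finset.prod_range_succ _ n

lemma invQPochhammer_eq_mul (hq : ‖q‖ < 1) (n : ℤ) :
    invQPochhammer q n = (1 - q ^ (n + 1)) * invQPochhammer q (n + 1) := by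
  match n with
  | .ofNat n =>
    change (qPochhammer q n)⁻¹ = (1 - q ^ ((n + 1 : ℕ) : ℤ)) * (qPochhammer q (n + 1))⁻¹
    rw [qPochhammer_succ, zpow_natCast, mul_inv, mul_left_comm,
      mul_inv_cancel₀ (one_sub_pow_succ_ne_zero hq n), mul_one]
  | .negSucc 0 => simp [invQPochhammer, Int.negSucc_eq]
  | .negSucc (n + 1) =>
    have hneg : Int.negSucc (n + 1) + 1 = Int.negSucc n := by omega
    simp [hneg, invQPochhammer]

lemma centeredQBinom_zero (q : 𝕜) (k : ℤ) : centeredQBinom q 0 k = if k = 0 then 1 else 0 := by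
  have hneg : ∀ n : ℤ, n < 0 → invQPochhammer q n = 0 := by
    rintro (n | n) hn
    · exact absurd hn (Int.natCast_nonneg n).not_gt
    · rfl
  rcases lt_trichotomy k 0 with hk | rfl | hk
  · simp [centeredQBinom, hneg k hk, hk.ne]
  · simp [centeredQBinom, invQPochhammer, qPochhammer]
  · simp [centeredQBinom, hneg (-k) (neg_lt_zero.2 hk), hk.ne']

lemma centeredQBinom_succ (hq : ‖q‖ < 1) (hq0 : q ≠ 0) (N : ℕ) (k : ℤ) :
    centeredQBinom q (N + 1) k = (1 + q ^ (2 * N + 1)) * centeredQBinom q N k +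
      q ^ (N + 1 - k) * centeredQBinom q N (k - 1) +
      q ^ (N + 1 + k) * centeredQBinom q N (k + 1) := by
  have rec_sub : ∀ j : ℤ, invQPochhammer q (N - j) =
      (1 - q ^ (N + 1 - j)) * invQPochhammer q (N + 1 - j) := fun j => by
    rw [invQPochhammer_eq_mul hq, sub_add_eq_add_sub]
  have rec_add : ∀ j : ℤ, invQPochhammer q (N + j) =
      (1 - q ^ (N + 1 + j)) * invQPochhammer q (N + 1 + j) := fun j => by
    rw [invQPochhammer_eq_mul hq, add_right_comm]
  have shift_sub : (N : ℤ) + 1 - (k + 1) = N - k := by ring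
  have shift_sub' : (N : ℤ) - (k - 1) = N + 1 - k := by ring
  have shift_add : (N : ℤ) + 1 + (k - 1) = N + k := by ring
  have shift_add' : (N : ℤ) + (k + 1) = N + 1 + k := by ring
  have hu : q ^ ((N : ℤ) - k) = q ^ ((N : ℤ) + 1 - k) / q := by
    rw [eq_div_iff hq0, ← zpow_add_one₀ hq0]; congr 1; ring
  have hv : q ^ ((N : ℤ) + k) = q ^ ((N : ℤ) + 1 + k) / q := by
    rw [eq_div_iff hq0, ← zpow_add_one₀ hq0]; congr 1; ring
  have huv : q ^ (2 * N + 2) = q ^ ((N : ℤ) + 1 - k) * q ^ ((N : ℤ) + 1 + k) := by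
    rw [← zpow_add₀ hq0, ← zpow_natCast]; congr 1; push_cast; ring
  have huv' : q ^ (2 * N + 1) = q ^ ((N : ℤ) + 1 - k) * q ^ ((N : ℤ) + 1 + k) / q := by
    rw [← huv, eq_div_iff hq0, ← pow_succ]
  have hP : qPochhammer q (2 * (N + 1)) =
      qPochhammer q (2 * N) * (1 - q ^ (2 * N + 1)) * (1 - q ^ (2 * N + 2)) := by
    rw [mul_add_one, qPochhammer_succ, qPochhammer_succ]
  simp only [centeredQBinom, hP, Nat.cast_add_one, rec_sub (k + 1), rec_add (k - 1), shift_sub,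
    shift_sub', shift_add, shift_add', rec_sub k, rec_add k, hu, hv, huv, huv']
  field_simp
  ring

lemma zpow_mul_centeredQBinom_succ (hx : ‖x‖ < 1) (hx0 : x ≠ 0) (hy : y ≠ 0) (N : ℕ) (k : ℤ) :
    x ^ k ^ 2 * y ^ k * centeredQBinom (x ^ 2) (N + 1) k =
      (1 + (x ^ 2) ^ (2 * N + 1)) * (x ^ k ^ 2 * y ^ k * centeredQBinom (x ^ 2) N k) +
      y * x ^ (2 * N + 1) * (x ^ (k - 1) ^ 2 * y ^ (k - 1) * centeredQBinom (x ^ 2) N (k - 1)) +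
      y⁻¹ * x ^ (2 * N + 1) *
        (x ^ (k + 1) ^ 2 * y ^ (k + 1) * centeredQBinom (x ^ 2) N (k + 1)) := by
  have hpow : ∀ j : ℤ, x ^ k ^ 2 * (x ^ 2) ^ (N + 1 + j) =
      x ^ (k ^ 2 + 2 * j + 1) * x ^ (2 * N + 1) := fun j => by
    rw [← zpow_natCast x 2, ← zpow_mul, ← zpow_natCast x (2 * N + 1), ← zpow_add₀ hx0,
      ← zpow_add₀ hx0]
    congr 1; push_cast; ring
  have hdown := hpow (-k)
  have hup := hpow k
  rw [show k ^ 2 + 2 * -k + 1 = (k - 1) ^ 2 by ring, ← sub_eq_add_neg] at hdown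
  rw [show k ^ 2 + 2 * k + 1 = (k + 1) ^ 2 by ring] at hup
  rw [centeredQBinom_succ (norm_pow_lt_one hx two_ne_zero) (pow_ne_zero 2 hx0),
    zpow_sub_one₀ hy, zpow_add_one₀ hy]
  field_simp
  linear_combination centeredQBinom (x ^ 2) N (k - 1) * hdown +
    centeredQBinom (x ^ 2) N (k + 1) * hup

lemma hasSum_centeredQBinom (hx : ‖x‖ < 1) (hx0 : x ≠ 0) (hy : y ≠ 0) (N : ℕ) :
    HasSum (fun k : ℤ => x ^ k ^ 2 * y ^ k * centeredQBinom (x ^ 2) N k)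
      (∏ i ∈ Finset.range N, (1 + y * x ^ (2 * i + 1)) * (1 + y⁻¹ * x ^ (2 * i + 1))) := by
  induction N with
  | zero =>
    simp only [centeredQBinom_zero, Finset.range_zero, Finset.prod_empty]
    convert hasSum_ite_eq (0 : ℤ) (1 : 𝕜) using 2 with k
    split_ifs with hk <;> simp [hk]
  | succ N ih =>
    have hprod : ∀ P : 𝕜, P * ((1 + y * x ^ (2 * N + 1)) * (1 + y⁻¹ * x ^ (2 * N + 1))) =
        (1 + (x ^ 2) ^ (2 * N + 1)) * P + y * x ^ (2 * N + 1) * P +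
          y⁻¹ * x ^ (2 * N + 1) * P := fun P => by
      field_simp
      ring
    rw [Finset.prod_range_succ, hprod, funext (zpow_mul_centeredQBinom_succ hx hx0 hy N)]
    exact ((ih.mul_left _).add (((Equiv.subRight (1 : ℤ)).hasSum_iff.2 ih).mul_left _)).add
      (((Equiv.addRight (1 : ℤ)).hasSum_iff.2 ih).mul_left _)

lemma summable_norm_neg_pow_succ (hq : ‖q‖ < 1) : Summable fun i : ℕ => ‖-q ^ (i + 1)‖ := by
  simpa only [norm_neg, norm_pow] using
    (summable_nat_add_iff 1).2 (summable_geometric_of_lt_one (norm_nonneg q) hq)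

lemma summable_zpow_sq_mul_zpow (hx : ‖x‖ < 1) (hx0 : x ≠ 0) (hy : y ≠ 0) :
    Summable fun k : ℤ => ‖x ^ k ^ 2 * y ^ k‖ := by
  have hx0' := norm_pos_iff.2 hx0
  have hT : 0 < -log ‖x‖ / π := div_pos (neg_pos.2 (log_neg hx0' hx)) pi_pos
  refine .of_nonneg_of_le (fun k => norm_nonneg _) (fun k => ?_)
    (summable_pow_mul_jacobiTheta₂_term_bound (|log ‖y‖| / (2 * π)) hT 0)
  rw [norm_mul, norm_zpow, norm_zpow, ← rpow_intCast, ← rpow_intCast, rpow_def_of_pos hx0',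
    rpow_def_of_pos (norm_pos_iff.2 hy), ← exp_add, pow_zero, one_mul]
  apply exp_le_exp.2
  have hlin : k * log ‖y‖ ≤ |log ‖y‖| * |(k : ℝ)| := by
    rw [← abs_mul, mul_comm]; exact le_abs_self _
  push_cast
  field_simp
  linarith

variable [CompleteSpace 𝕜]

lemma hasProd_eulerFunction (hq : ‖q‖ < 1) :
    HasProd (fun i : ℕ => 1 - q ^ (i + 1)) (eulerFunction q) := by
  have h := (multipliable_one_add_of_summable (R := 𝕜) (summable_norm_neg_pow_succ hq)).hasProd
  simp only [← sub_eq_add_neg] at h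
  exact h

lemma eulerFunction_ne_zero (hq : ‖q‖ < 1) : eulerFunction q ≠ 0 := by
  have h := tprod_one_add_ne_zero_of_summable (R := 𝕜)
    (fun i => (sub_eq_add_neg (1 : 𝕜) _).symm.trans_ne (one_sub_pow_succ_ne_zero hq i))
    (summable_norm_neg_pow_succ hq)
  simp only [← sub_eq_add_neg] at h
  exact h

lemma tendsto_qPochhammer (hq : ‖q‖ < 1) :
    Tendsto (qPochhammer q) atTop (𝓝 (eulerFunction q)) :=
  (hasProd_eulerFunction hq).tendsto_prod_nat

lemma tendsto_invQPochhammer (hq : ‖q‖ < 1) (k : ℤ) :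
    Tendsto (fun N : ℕ => invQPochhammer q (N + k)) atTop (𝓝 (eulerFunction q)⁻¹) := by
  have hlim : Tendsto (invQPochhammer q) atTop (𝓝 (eulerFunction q)⁻¹) := by
    rw [← Nat.map_cast_int_atTop, tendsto_map'_iff]
    exact (tendsto_qPochhammer hq).inv₀ (eulerFunction_ne_zero hq)
  exact hlim.comp (tendsto_atTop_add_const_right _ k tendsto_natCast_atTop_atTop)

lemma exists_norm_qPochhammer_le (hq : ‖q‖ < 1) : ∃ C, ∀ n, ‖qPochhammer q n‖ ≤ C := by
  obtain ⟨C, hC⟩ := (Metric.isBounded_range_of_tendsto _ (tendsto_qPochhammer hq)).exists_norm_le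
  exact ⟨C, fun n => hC _ ⟨n, rfl⟩⟩

lemma exists_norm_invQPochhammer_le (hq : ‖q‖ < 1) : ∃ C, ∀ n, ‖invQPochhammer q n‖ ≤ C := by
  have hlim := (tendsto_qPochhammer hq).inv₀ (eulerFunction_ne_zero hq)
  obtain ⟨C, hC⟩ := (Metric.isBounded_range_of_tendsto _ hlim).exists_norm_le
  refine ⟨C, ?_⟩
  rintro (n | _)
  · exact hC _ ⟨n, rfl⟩
  · exact norm_zero.trans_le ((norm_nonneg _).trans (hC _ ⟨0, rfl⟩))

lemma exists_norm_centeredQBinom_le (hq : ‖q‖ < 1) : ∃ C, ∀ N k, ‖centeredQBinom q N k‖ ≤ C := by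
  obtain ⟨A, hA⟩ := exists_norm_qPochhammer_le hq
  obtain ⟨B, hB⟩ := exists_norm_invQPochhammer_le hq
  have hA0 : 0 ≤ A := (norm_nonneg _).trans (hA 0)
  have hB0 : 0 ≤ B := (norm_nonneg _).trans (hB 0)
  refine ⟨A * B * B, fun N k => ?_⟩
  rw [centeredQBinom, norm_mul, norm_mul]
  gcongr
  exacts [hA _, hB _, hB _]

lemma tendsto_centeredQBinom (hq : ‖q‖ < 1) (k : ℤ) :
    Tendsto (fun N => centeredQBinom q N k) atTop (𝓝 (eulerFunction q)⁻¹) := by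
  have hcenter : Tendsto (fun N => qPochhammer q (2 * N)) atTop (𝓝 (eulerFunction q)) :=
    (tendsto_qPochhammer hq).comp (tendsto_id.const_mul_atTop' two_pos)
  have h := (hcenter.mul (tendsto_invQPochhammer hq (-k))).mul (tendsto_invQPochhammer hq k)
  rwa [mul_inv_cancel₀ (eulerFunction_ne_zero hq), one_mul] at h

theorem tsum_zpow_sq_mul_zpow (hx : ‖x‖ < 1) (hx0 : x ≠ 0) (hy : y ≠ 0) {P Q : 𝕜}
    (hP : HasProd (fun i : ℕ => 1 + y * x ^ (2 * i + 1)) P)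
    (hQ : HasProd (fun i : ℕ => 1 + y⁻¹ * x ^ (2 * i + 1)) Q) :
    ∑' k : ℤ, x ^ k ^ 2 * y ^ k = eulerFunction (x ^ 2) * (P * Q) := by
  have hq := norm_pow_lt_one hx two_ne_zero
  obtain ⟨C, hC⟩ := exists_norm_centeredQBinom_le hq
  have hlim := tendsto_tsum_of_dominated_convergence
    ((summable_zpow_sq_mul_zpow hx hx0 hy).mul_right C)
    (fun k => (tendsto_centeredQBinom hq k).const_mul (x ^ k ^ 2 * y ^ k))
    (.of_forall fun N k => (norm_mul _ _).trans_le (by gcongr; exact hC N k))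
  simp only [(hasSum_centeredQBinom hx hx0 hy _).tsum_eq, tsum_mul_right] at hlim
  rw [← tendsto_nhds_unique hlim (hP.mul hQ).tendsto_prod_nat, mul_left_comm,
    mul_inv_cancel₀ (eulerFunction_ne_zero hq), mul_one]

lemma hasProd_one_sub_pow_odd (hq : ‖q‖ < 1) :
    HasProd (fun i : ℕ => 1 - q ^ (2 * i + 1)) (eulerFunction q / eulerFunction (q ^ 2)) := by
  have hodd : Summable fun i : ℕ => ‖-q ^ (2 * i + 1)‖ :=
    (summable_norm_neg_pow_succ hq).comp_injective (mul_right_injective₀ two_ne_zero)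
  have h := (multipliable_one_add_of_summable (R := 𝕜) hodd).hasProd
  simp only [← sub_eq_add_neg] at h
  have heven : HasProd (fun i : ℕ => 1 - q ^ (2 * i + 1 + 1)) (eulerFunction (q ^ 2)) := by
    simpa only [← pow_mul, mul_add_one] using hasProd_eulerFunction (norm_pow_lt_one hq two_ne_zero)
  have hsplit := (HasProd.even_mul_odd (f := fun i : ℕ => 1 - q ^ (i + 1)) h heven).unique
    (hasProd_eulerFunction hq)
  rwa [← hsplit, mul_div_cancel_right₀ _ (eulerFunction_ne_zero (norm_pow_lt_one hq two_ne_zero))]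

lemma hasProd_one_add_pow_succ (hq : ‖q‖ < 1) :
    HasProd (fun i : ℕ => 1 + q ^ (i + 1)) (eulerFunction (q ^ 2) / eulerFunction q) := by
  refine ((hasProd_eulerFunction (norm_pow_lt_one hq two_ne_zero)).div₀ (hasProd_eulerFunction hq)
    (eulerFunction_ne_zero hq)).congr_fun fun i => ?_
  rw [eq_div_iff (one_sub_pow_succ_ne_zero hq i)]
  ring

lemma tsum_zpow_sq_mul_neg_one_zpow (hx : ‖x‖ < 1) (hx0 : x ≠ 0) :
    ∑' k : ℤ, x ^ k ^ 2 * (-1) ^ k = eulerFunction x ^ 2 / eulerFunction (x ^ 2) := by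
  have hodd : HasProd (fun i : ℕ => 1 + -1 * x ^ (2 * i + 1))
      (eulerFunction x / eulerFunction (x ^ 2)) := by
    simpa only [neg_one_mul, ← sub_eq_add_neg] using hasProd_one_sub_pow_odd hx
  rw [tsum_zpow_sq_mul_zpow hx hx0 (neg_ne_zero.2 one_ne_zero) hodd (by rwa [inv_neg_one])]
  have hE2 := eulerFunction_ne_zero (norm_pow_lt_one hx two_ne_zero)
  field_simp

lemma tsum_zpow_sq_mul_self_zpow (hx : ‖x‖ < 1) (hx0 : x ≠ 0) :
    ∑' k : ℤ, x ^ k ^ 2 * x ^ k = 2 * eulerFunction (x ^ 4) ^ 2 / eulerFunction (x ^ 2) := by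
  have hx2 := norm_pow_lt_one hx two_ne_zero
  set P := eulerFunction (x ^ 4) / eulerFunction (x ^ 2) with hP_def
  have hsucc : HasProd (fun i : ℕ => 1 + (x ^ 2) ^ (i + 1)) P := by
    simpa only [← pow_mul x 2 2] using hasProd_one_add_pow_succ hx2
  have hP : HasProd (fun i : ℕ => 1 + x * x ^ (2 * i + 1)) P := by
    simpa only [← pow_mul, ← pow_succ', mul_add_one] using hsucc
  have hQ : HasProd (fun i : ℕ => 1 + x⁻¹ * x ^ (2 * i + 1)) (2 * P) := by
    simpa only [pow_zero, one_add_one_eq_two, pow_succ' _ (2 * _), inv_mul_cancel_left₀ hx0,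
      pow_mul] using HasProd.zero_mul (f := fun i : ℕ => 1 + (x ^ 2) ^ i) hsucc
  rw [tsum_zpow_sq_mul_zpow hx hx0 hx0 hP hQ, hP_def]
  have hE2 := eulerFunction_ne_zero hx2
  field_simp

end TripleProduct

lemma eulerFunction_pos {q : ℝ} (hq0 : 0 ≤ q) (hq1 : q < 1) : 0 < eulerFunction q := by
  have hq : ‖q‖ < 1 := by rwa [norm_eq_abs, abs_of_nonneg hq0]
  refine (eulerFunction_ne_zero hq).symm.lt_of_le ?_
  exact ge_of_tendsto' (tendsto_qPochhammer hq) fun n =>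
    Finset.prod_nonneg fun i _ => sub_nonneg.2 (pow_le_one₀ hq0 hq1.le)

/-! ### Theta series -/

section ExponentialSeries

variable {ι : Type*} {a c : ι → ℝ} {t : ℝ}

lemma summable_mul_exp_neg_mul (hc : ∀ i, 0 ≤ c i)
    (hsum : ∀ s > 0, Summable fun i => rexp (-s * c i)) (ht : 0 < t) :
    Summable fun i => c i * rexp (-t * c i) := by
  refine .of_nonneg_of_le (fun i => mul_nonneg (hc i) (exp_pos _).le) (fun i => ?_)
    ((hsum (t / 2) (half_pos ht)).mul_left (2 / t))
  have hle : c i ≤ 2 / t * rexp (t / 2 * c i) := by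
    rw [div_mul_eq_mul_div, le_div_iff₀ ht]
    linarith [add_one_le_exp (t / 2 * c i)]
  calc c i * rexp (-t * c i) ≤ 2 / t * rexp (t / 2 * c i) * rexp (-t * c i) := by gcongr
    _ = 2 / t * rexp (-(t / 2) * c i) := by rw [mul_assoc, ← exp_add]; ring_nf

lemma hasDerivAt_tsum_exp_neg_mul (hc : ∀ i, 0 ≤ c i)
    (hsum : ∀ s > 0, Summable fun i => rexp (-s * c i)) (ht : 0 < t) :
    HasDerivAt (fun s => ∑' i, rexp (-s * c i)) (∑' i, -c i * rexp (-t * c i)) t := by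
  have hmem : t ∈ Set.Ioi (t / 2) := half_lt_self ht
  refine hasDerivAt_tsum_of_isPreconnected (g := fun i s => rexp (-s * c i))
    (g' := fun i s => -c i * rexp (-s * c i)) (summable_mul_exp_neg_mul hc hsum (half_pos ht))
    isOpen_Ioi isPreconnected_Ioi (fun i s _ => ?_) (fun i s hs => ?_) hmem (hsum t ht) hmem
  · exact (((hasDerivAt_id s).neg.mul_const (c i)).exp).congr_deriv (by simp; ring)
  · rw [norm_mul, norm_neg, norm_of_nonneg (hc i), norm_of_nonneg (exp_pos _).le]
    gcongr
    exacts [hc i, hc i, (Set.mem_Ioi.1 hs).le]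

lemma tendsto_tsum_mul_exp_neg_mul_atTop (hc : ∀ i, 0 ≤ c i)
    (hsum : Summable fun i => |a i| * rexp (-1 * c i)) :
    Tendsto (fun t => ∑' i, a i * rexp (-t * c i)) atTop
      (𝓝 (∑' i, if c i = 0 then a i else 0)) := by
  refine tendsto_tsum_of_dominated_convergence hsum (fun i => ?_) ?_
  · split_ifs with h
    · simp [h]
    · have hpos : 0 < c i := (hc i).lt_of_ne' h
      have hexp : Tendsto (fun t => rexp (-t * c i)) atTop (𝓝 0) :=
        tendsto_exp_atBot.comp (tendsto_neg_atTop_atBot.atBot_mul_const hpos)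
      simpa using hexp.const_mul (a i)
  · filter_upwards [eventually_ge_atTop 1] with t ht i
    rw [norm_mul, norm_of_nonneg (exp_pos _).le, norm_eq_abs]
    gcongr
    exact hc i

end ExponentialSeries

/-- The theta constant `θ₂ = ∑ q^{(k + 1/2)²}` at the nome `q = exp (-t)`. -/
noncomputable def theta₂ (t : ℝ) : ℝ := ∑' k : ℤ, rexp (-t * (k + 1 / 2) ^ 2)

/-- The theta constant `θ₃ = ∑ q^{k²}` at the nome `q = exp (-t)`. -/
noncomputable def theta₃ (t : ℝ) : ℝ := ∑' k : ℤ, rexp (-t * k ^ 2)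

/-- The theta constant `θ₄ = ∑ (-1)^k q^{k²}` at the nome `q = exp (-t)`. -/
noncomputable def theta₄ (t : ℝ) : ℝ := ∑' k : ℤ, (-1) ^ k * rexp (-t * k ^ 2)

section Theta

variable {t : ℝ}

lemma summable_exp_neg_mul_add_sq (ht : 0 < t) (c : ℝ) :
    Summable fun k : ℤ => rexp (-t * (k + c) ^ 2) := by
  refine (HurwitzZeta.hasSum_int_evenKernel c (div_pos ht pi_pos)).summable.congr fun k => ?_
  congr 1
  field_simp

lemma summable_exp_neg_mul_sq (ht : 0 < t) : Summable fun k : ℤ => rexp (-t * k ^ 2) := by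
  simpa only [add_zero] using summable_exp_neg_mul_add_sq ht 0

lemma summable_neg_one_zpow_mul_exp_neg_mul_sq (ht : 0 < t) :
    Summable fun k : ℤ => (-1 : ℝ) ^ k * rexp (-t * k ^ 2) :=
  .of_norm ((summable_exp_neg_mul_sq ht).congr fun k => by simp)

lemma theta₂_pos (ht : 0 < t) : 0 < theta₂ t :=
  (summable_exp_neg_mul_add_sq ht _).tsum_pos (fun _ => (exp_pos _).le) 0 (exp_pos _)

lemma theta₃_pos (ht : 0 < t) : 0 < theta₃ t :=
  (summable_exp_neg_mul_sq ht).tsum_pos (fun _ => (exp_pos _).le) 0 (exp_pos _)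

lemma theta₄_eq_eulerFunction (ht : 0 < t) :
    theta₄ t = eulerFunction (rexp (-t)) ^ 2 / eulerFunction (rexp (-2 * t)) := by
  have hx : ‖rexp (-t)‖ < 1 := by simpa [abs_of_pos (exp_pos _)] using ht
  have hsq : rexp (-2 * t) = rexp (-t) ^ 2 := by rw [← exp_nat_mul]; ring_nf
  rw [hsq, ← tsum_zpow_sq_mul_neg_one_zpow hx (exp_ne_zero _), theta₄]
  refine tsum_congr fun k => ?_
  rw [mul_comm, ← rpow_intCast (rexp _), ← exp_mul]
  push_cast
  ring_nf

lemma theta₂_eq_eulerFunction (ht : 0 < t) :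
    theta₂ t = 2 * rexp (-t / 4) * (eulerFunction (rexp (-4 * t)) ^ 2 /
      eulerFunction (rexp (-2 * t))) := by
  have hx : ‖rexp (-t)‖ < 1 := by simpa [abs_of_pos (exp_pos _)] using ht
  have hsq : rexp (-2 * t) = rexp (-t) ^ 2 := by rw [← exp_nat_mul]; ring_nf
  have hfour : rexp (-4 * t) = rexp (-t) ^ 4 := by rw [← exp_nat_mul]; ring_nf
  rw [hsq, hfour, mul_comm 2, mul_assoc, ← mul_div_assoc,
    ← tsum_zpow_sq_mul_self_zpow hx (exp_ne_zero _), theta₂, ← tsum_mul_left]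
  refine tsum_congr fun k => ?_
  rw [← rpow_intCast, ← rpow_intCast, ← exp_mul, ← exp_mul, ← exp_add, ← exp_add]
  push_cast
  ring_nf

lemma theta₄_pos (ht : 0 < t) : 0 < theta₄ t := by
  rw [theta₄_eq_eulerFunction ht]
  have h1 : rexp (-t) < 1 := exp_lt_one_iff.2 (by linarith)
  have h2 : rexp (-2 * t) < 1 := exp_lt_one_iff.2 (by linarith)
  exact div_pos (pow_pos (eulerFunction_pos (exp_pos _).le h1) 2)
    (eulerFunction_pos (exp_pos _).le h2)

/-! ### Products of theta series -/

/-- The part of the double theta series with exponents `a m² + b n²` carried by the lattice points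
`(m, n)` with `m + n` even, parametrised as `(u + v, u - v)`. -/
noncomputable def evenLatticeSum (a b : ℝ) : ℝ :=
  ∑' p : ℤ × ℤ, rexp (-a * (p.1 + p.2) ^ 2) * rexp (-b * (p.1 - p.2) ^ 2)

/-- The part of the double theta series with exponents `a m² + b n²` carried by the lattice points
`(m, n)` with `m + n` odd, parametrised as `(u + v + 1, u - v)`. -/
noncomputable def oddLatticeSum (a b : ℝ) : ℝ :=
  ∑' p : ℤ × ℤ, rexp (-a * (p.1 + p.2 + 1) ^ 2) * rexp (-b * (p.1 - p.2) ^ 2)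

lemma tsum_int_prod_eq_even_add_odd {F : ℤ × ℤ → ℝ} (hF : Summable F) :
    ∑' p, F p = ∑' p : ℤ × ℤ, F (p.1 + p.2, p.1 - p.2) +
      ∑' p : ℤ × ℤ, F (p.1 + p.2 + 1, p.1 - p.2) := by
  set even : ℤ × ℤ → ℤ × ℤ := fun p => (p.1 + p.2, p.1 - p.2) with even_def
  set odd : ℤ × ℤ → ℤ × ℤ := fun p => (p.1 + p.2 + 1, p.1 - p.2) with odd_def
  have even_inj : Function.Injective even := by
    rintro ⟨a, b⟩ ⟨c, d⟩ h
    simp only [even_def, Prod.mk.injEq] at h ⊢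
    omega
  have odd_inj : Function.Injective odd := by
    rintro ⟨a, b⟩ ⟨c, d⟩ h
    simp only [odd_def, Prod.mk.injEq] at h ⊢
    omega
  have hcompl : IsCompl (Set.range even) (Set.range odd) := by
    constructor
    · rw [Set.disjoint_left]
      rintro _ ⟨⟨a, b⟩, rfl⟩ ⟨⟨c, d⟩, h⟩
      simp only [even_def, odd_def, Prod.mk.injEq] at h
      omega
    · rw [codisjoint_iff_le_sup]
      rintro ⟨m, n⟩ -
      rcases Int.even_or_odd' (m + n) with ⟨u, hu | hu⟩
      · exact .inl ⟨(u, m - u), by simp only [even_def, Prod.mk.injEq]; omega⟩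
      · exact .inr ⟨(u, m - 1 - u), by simp only [odd_def, Prod.mk.injEq]; omega⟩
  exact (HasSum.add_isCompl hcompl
    (even_inj.hasSum_range_iff.2 (hF.comp_injective even_inj).hasSum)
    (odd_inj.hasSum_range_iff.2 (hF.comp_injective odd_inj).hasSum)).tsum_eq

lemma tsum_mul_tsum_eq_even_add_odd {f g : ℤ → ℝ} (hf : Summable f) (hg : Summable g) :
    (∑' k, f k) * ∑' k, g k = ∑' p : ℤ × ℤ, f (p.1 + p.2) * g (p.1 - p.2) +
      ∑' p : ℤ × ℤ, f (p.1 + p.2 + 1) * g (p.1 - p.2) := by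
  rw [tsum_mul_tsum_of_summable_norm hf.norm hg.norm,
    tsum_int_prod_eq_even_add_odd (summable_mul_of_summable_norm hf.norm hg.norm)]

lemma theta₃_mul_theta₃ {a b : ℝ} (ha : 0 < a) (hb : 0 < b) :
    theta₃ a * theta₃ b = evenLatticeSum a b + oddLatticeSum a b := by
  rw [theta₃, theta₃, tsum_mul_tsum_eq_even_add_odd (summable_exp_neg_mul_sq ha)
    (summable_exp_neg_mul_sq hb)]
  push_cast
  rfl

lemma theta₄_mul_theta₄ {a b : ℝ} (ha : 0 < a) (hb : 0 < b) :
    theta₄ a * theta₄ b = evenLatticeSum a b - oddLatticeSum a b := by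
  have even_sign : ∀ u v : ℤ, (-1 : ℝ) ^ (u + v) * (-1) ^ (u - v) = 1 := fun u v => by
    rw [← zpow_add₀ (by norm_num), show u + v + (u - v) = 2 * u by ring,
      (even_two_mul u).neg_one_zpow]
  have odd_sign : ∀ u v : ℤ, (-1 : ℝ) ^ (u + v + 1) * (-1) ^ (u - v) = -1 := fun u v => by
    rw [zpow_add_one₀ (by norm_num), mul_right_comm, even_sign, one_mul]
  rw [theta₄, theta₄, tsum_mul_tsum_eq_even_add_odd (summable_neg_one_zpow_mul_exp_neg_mul_sq ha)
    (summable_neg_one_zpow_mul_exp_neg_mul_sq hb), sub_eq_add_neg, oddLatticeSum, ← tsum_neg,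
    evenLatticeSum]
  simp only [mul_mul_mul_comm, even_sign, odd_sign, one_mul, neg_one_mul]
  push_cast
  rfl

lemma evenLatticeSum_self (ht : 0 < t) : evenLatticeSum t t = theta₃ (2 * t) ^ 2 := by
  have hsum := (summable_exp_neg_mul_sq (mul_pos two_pos ht)).norm
  rw [sq, theta₃, tsum_mul_tsum_of_summable_norm hsum hsum]
  refine tsum_congr fun p => ?_
  rw [← exp_add, ← exp_add]
  ring_nf

lemma oddLatticeSum_self (ht : 0 < t) : oddLatticeSum t t = theta₂ (2 * t) ^ 2 := by
  have hsum := (summable_exp_neg_mul_add_sq (mul_pos two_pos ht) (1 / 2)).norm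
  rw [sq, theta₂, tsum_mul_tsum_of_summable_norm hsum hsum]
  refine tsum_congr fun p => ?_
  rw [← exp_add, ← exp_add]
  ring_nf

lemma theta₃_sq (ht : 0 < t) : theta₃ t ^ 2 = theta₃ (2 * t) ^ 2 + theta₂ (2 * t) ^ 2 := by
  rw [sq, theta₃_mul_theta₃ ht ht, evenLatticeSum_self ht, oddLatticeSum_self ht]

lemma theta₄_sq (ht : 0 < t) : theta₄ t ^ 2 = theta₃ (2 * t) ^ 2 - theta₂ (2 * t) ^ 2 := by
  rw [sq, theta₄_mul_theta₄ ht ht, evenLatticeSum_self ht, oddLatticeSum_self ht]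

lemma theta₂_sq (ht : 0 < t) : theta₂ t ^ 2 = 2 * theta₂ (2 * t) * theta₃ (2 * t) := by
  have h₂ := summable_exp_neg_mul_add_sq ht (1 / 2)
  have h₂' := (summable_exp_neg_mul_add_sq (mul_pos two_pos ht) (1 / 2)).norm
  have h₃ := (summable_exp_neg_mul_sq (mul_pos two_pos ht)).norm
  have h₃' := (summable_exp_neg_mul_add_sq (mul_pos two_pos ht) 1).norm
  have hshift : ∑' k : ℤ, rexp (-(2 * t) * (k + 1) ^ 2) = theta₃ (2 * t) := by
    simpa only [theta₃, Equiv.coe_addRight, Int.cast_add, Int.cast_one] using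
      (Equiv.addRight (1 : ℤ)).tsum_eq fun k : ℤ => rexp (-(2 * t) * k ^ 2)
  have heven : ∑' p : ℤ × ℤ, rexp (-t * ((p.1 + p.2 : ℤ) + 1 / 2) ^ 2) *
      rexp (-t * ((p.1 - p.2 : ℤ) + 1 / 2) ^ 2) = theta₂ (2 * t) * theta₃ (2 * t) := by
    rw [theta₂, theta₃, tsum_mul_tsum_of_summable_norm h₂' h₃]
    refine tsum_congr fun p => ?_
    rw [← exp_add, ← exp_add]
    push_cast
    ring_nf
  have hodd : ∑' p : ℤ × ℤ, rexp (-t * ((p.1 + p.2 + 1 : ℤ) + 1 / 2) ^ 2) *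
      rexp (-t * ((p.1 - p.2 : ℤ) + 1 / 2) ^ 2) = theta₃ (2 * t) * theta₂ (2 * t) := by
    rw [← hshift, theta₂, tsum_mul_tsum_of_summable_norm h₃' h₂']
    refine tsum_congr fun p => ?_
    rw [← exp_add, ← exp_add]
    push_cast
    ring_nf
  rw [sq, theta₂, tsum_mul_tsum_eq_even_add_odd h₂ h₂, heven, hodd]
  ring

lemma theta₃_pow_four (ht : 0 < t) : theta₃ t ^ 4 = theta₂ t ^ 4 + theta₄ t ^ 4 := by
  linear_combination (theta₃ t ^ 2 + theta₃ (2 * t) ^ 2 + theta₂ (2 * t) ^ 2) * theta₃_sq ht -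
    (theta₂ t ^ 2 + 2 * theta₂ (2 * t) * theta₃ (2 * t)) * theta₂_sq ht -
    (theta₄ t ^ 2 + theta₃ (2 * t) ^ 2 - theta₂ (2 * t) ^ 2) * theta₄_sq ht

lemma theta₃_mul_theta₄ (ht : 0 < t) : theta₃ t * theta₄ t = theta₄ (2 * t) ^ 2 := by
  have hsq : (theta₃ t * theta₄ t) ^ 2 = (theta₄ (2 * t) ^ 2) ^ 2 := by
    rw [mul_pow, theta₃_sq ht, theta₄_sq ht]
    linear_combination theta₃_pow_four (mul_pos two_pos ht)
  exact (pow_left_inj₀ (mul_pos (theta₃_pos ht) (theta₄_pos ht)).le (sq_nonneg _)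
    two_ne_zero).1 hsq

lemma theta₂_mul_theta₂_three_mul (ht : 0 < t) :
    theta₂ t * theta₂ (3 * t) = 2 * oddLatticeSum t (3 * t) := by
  let evenEquiv : ℤ × ℤ ≃ ℤ × ℤ := ⟨fun p => (p.1, p.1 - p.2), fun p => (p.1, p.1 - p.2),
    fun p => by simp, fun p => by simp⟩
  let oddEquiv : ℤ × ℤ ≃ ℤ × ℤ := ⟨fun p => (p.2, p.2 - p.1 - 1), fun p => (p.1 - p.2 - 1, p.1),
    fun p => by ext <;> simp [sub_sub], fun p => by ext <;> simp [sub_sub]⟩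
  have heven : ∑' p : ℤ × ℤ, rexp (-t * ((p.1 + p.2 : ℤ) + 1 / 2) ^ 2) *
      rexp (-(3 * t) * ((p.1 - p.2 : ℤ) + 1 / 2) ^ 2) = oddLatticeSum t (3 * t) := by
    rw [oddLatticeSum, ← evenEquiv.tsum_eq]
    refine tsum_congr fun p => ?_
    rw [← exp_add, ← exp_add]
    simp only [evenEquiv, Equiv.coe_fn_mk]
    push_cast
    ring_nf
  have hodd : ∑' p : ℤ × ℤ, rexp (-t * ((p.1 + p.2 + 1 : ℤ) + 1 / 2) ^ 2) *
      rexp (-(3 * t) * ((p.1 - p.2 : ℤ) + 1 / 2) ^ 2) = oddLatticeSum t (3 * t) := by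
    rw [oddLatticeSum, ← oddEquiv.tsum_eq (fun p : ℤ × ℤ => rexp (-t * (p.1 + p.2 + 1) ^ 2) *
      rexp (-(3 * t) * (p.1 - p.2) ^ 2))]
    refine tsum_congr fun p => ?_
    rw [← exp_add, ← exp_add]
    simp only [oddEquiv, Equiv.coe_fn_mk]
    push_cast
    ring_nf
  rw [theta₂, theta₂, tsum_mul_tsum_eq_even_add_odd (summable_exp_neg_mul_add_sq ht _)
    (summable_exp_neg_mul_add_sq (mul_pos three_pos ht) _), heven, hodd, two_mul]

lemma theta₃_mul_sub_theta₄_mul (ht : 0 < t) :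
    theta₃ t * theta₃ (3 * t) - theta₄ t * theta₄ (3 * t) = theta₂ t * theta₂ (3 * t) := by
  have h3t := mul_pos three_pos ht
  rw [theta₃_mul_theta₃ ht h3t, theta₄_mul_theta₄ ht h3t, theta₂_mul_theta₂_three_mul ht]
  ring

/-! ### Modular inversion -/

lemma evenKernel_zero_eq_theta₃ (ht : 0 < t) : HurwitzZeta.evenKernel 0 (t / π) = theta₃ t := by
  have h := (HurwitzZeta.hasSum_int_evenKernel 0 (div_pos ht pi_pos)).tsum_eq
  rw [QuotientAddGroup.mk_zero] at h
  rw [← h, theta₃]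
  refine tsum_congr fun k => ?_
  rw [add_zero]
  field_simp

lemma evenKernel_half_eq_theta₂ (ht : 0 < t) :
    HurwitzZeta.evenKernel (1 / 2 : ℝ) (t / π) = theta₂ t := by
  rw [← (HurwitzZeta.hasSum_int_evenKernel (1 / 2) (div_pos ht pi_pos)).tsum_eq, theta₂]
  refine tsum_congr fun k => ?_
  field_simp

lemma cosKernel_half_eq_theta₄ (ht : 0 < t) :
    HurwitzZeta.cosKernel (1 / 2 : ℝ) (t / π) = theta₄ t := by
  have h := (HurwitzZeta.hasSum_int_cosKernel (1 / 2) (div_pos ht pi_pos)).tsum_eq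
  apply Complex.ofReal_injective
  rw [← h, theta₄, Complex.ofReal_tsum]
  refine tsum_congr fun k => ?_
  have hsign : Complex.exp (2 * π * Complex.I * (1 / 2 : ℝ) * k) = (-1) ^ k := by
    rw [← Complex.exp_pi_mul_I, ← Complex.exp_int_mul]
    push_cast
    ring_nf
  rw [hsign]
  push_cast
  field_simp

lemma div_pi_rpow_half_sq {s : ℝ} (ht : 0 < t) (h : t * s = π ^ 2) :
    1 / (t / π) = s / π ∧ ((t / π) ^ (1 / 2 : ℝ)) ^ 2 = t / π := by
  constructor
  · field_simp
    linarith
  · rw [← rpow_natCast, ← rpow_mul (div_pos ht pi_pos).le]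
    norm_num

lemma mul_theta₃_sq_of_mul_eq {s : ℝ} (ht : 0 < t) (h : t * s = π ^ 2) :
    t * theta₃ t ^ 2 = π * theta₃ s ^ 2 := by
  have hs : 0 < s := pos_of_mul_pos_right (h ▸ pow_pos pi_pos 2) ht.le
  obtain ⟨hinv, hroot⟩ := div_pi_rpow_half_sq ht h
  have hfe := HurwitzZeta.evenKernel_functional_equation 0 (t / π)
  rw [← HurwitzZeta.evenKernel_eq_cosKernel_of_zero, hinv, evenKernel_zero_eq_theta₃ ht,
    evenKernel_zero_eq_theta₃ hs] at hfe
  rw [hfe, mul_pow, div_pow, hroot]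
  field_simp

lemma mul_theta₂_sq_of_mul_eq {s : ℝ} (ht : 0 < t) (h : t * s = π ^ 2) :
    t * theta₂ t ^ 2 = π * theta₄ s ^ 2 := by
  have hs : 0 < s := pos_of_mul_pos_right (h ▸ pow_pos pi_pos 2) ht.le
  obtain ⟨hinv, hroot⟩ := div_pi_rpow_half_sq ht h
  have hfe := HurwitzZeta.evenKernel_functional_equation (1 / 2 : ℝ) (t / π)
  rw [hinv, evenKernel_half_eq_theta₂ ht, cosKernel_half_eq_theta₄ hs] at hfe
  rw [hfe, mul_pow, div_pow, hroot]
  field_simp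

/-! ### Derivatives and asymptotics -/

lemma hasDerivAt_theta₂ (ht : 0 < t) :
    HasDerivAt theta₂ (∑' k : ℤ, -((k : ℝ) + 1 / 2) ^ 2 * rexp (-t * (k + 1 / 2) ^ 2)) t :=
  hasDerivAt_tsum_exp_neg_mul (fun _ => sq_nonneg _)
    (fun _ hs => summable_exp_neg_mul_add_sq hs _) ht

lemma hasDerivAt_theta₃ (ht : 0 < t) :
    HasDerivAt theta₃ (∑' k : ℤ, -(k : ℝ) ^ 2 * rexp (-t * k ^ 2)) t :=
  hasDerivAt_tsum_exp_neg_mul (fun _ => sq_nonneg _) (fun _ hs => summable_exp_neg_mul_sq hs) ht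

lemma tendsto_tsum_mul_exp_neg_mul_int_sq {a : ℤ → ℝ}
    (ha : Summable fun k : ℤ => |a k| * rexp (-1 * (k : ℝ) ^ 2)) :
    Tendsto (fun t => ∑' k : ℤ, a k * rexp (-t * k ^ 2)) atTop (𝓝 (a 0)) := by
  simpa using tendsto_tsum_mul_exp_neg_mul_atTop (fun k : ℤ => sq_nonneg (k : ℝ)) ha

lemma tendsto_theta₃ : Tendsto theta₃ atTop (𝓝 1) := by
  have h := tendsto_tsum_mul_exp_neg_mul_int_sq (a := fun _ => 1)
    (by simpa using summable_exp_neg_mul_sq one_pos)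
  simp only [one_mul] at h
  exact h

lemma tendsto_theta₄ : Tendsto theta₄ atTop (𝓝 1) := by
  have h := tendsto_tsum_mul_exp_neg_mul_int_sq (a := fun k => (-1) ^ k)
    (by simpa using summable_exp_neg_mul_sq one_pos)
  simp only [zpow_zero] at h
  exact h

lemma tendsto_logDeriv_theta₃ : Tendsto (logDeriv theta₃) atTop (𝓝 0) := by
  have hsum : Summable fun k : ℤ => |-(k : ℝ) ^ 2| * rexp (-1 * (k : ℝ) ^ 2) := by
    simpa only [abs_neg, abs_sq] using summable_mul_exp_neg_mul (fun k : ℤ => sq_nonneg (k : ℝ))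
      (fun s hs => summable_exp_neg_mul_sq hs) one_pos
  have hderiv : Tendsto (deriv theta₃) atTop (𝓝 0) := by
    refine Tendsto.congr' ?_ (by simpa using tendsto_tsum_mul_exp_neg_mul_int_sq hsum)
    filter_upwards [eventually_gt_atTop 0] with t ht
    simpa using (hasDerivAt_theta₃ ht).deriv.symm
  simpa only [logDeriv, zero_div] using hderiv.div tendsto_theta₃ one_ne_zero

lemma intCast_mul_add_one_nonneg (k : ℤ) : 0 ≤ (k : ℝ) * (k + 1) := by
  rcases lt_or_ge k 0 with hneg | hnonneg
  · exact_mod_cast mul_nonneg_of_nonpos_of_nonpos hneg.le (Int.add_one_le_of_lt hneg)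
  · positivity

lemma tendsto_exp_mul_tsum_mul_exp_neg_mul_add_half_sq {a : ℤ → ℝ}
    (ha : Summable fun k : ℤ => |a k| * rexp (-1 * ((k : ℝ) + 1 / 2) ^ 2)) :
    Tendsto (fun t => rexp (t / 4) * ∑' k : ℤ, a k * rexp (-t * (k + 1 / 2) ^ 2)) atTop
      (𝓝 (a 0 + a (-1))) := by
  have hexp : ∀ t k : ℝ, rexp (-t * (k * (k + 1))) =
      rexp (t / 4) * rexp (-t * (k + 1 / 2) ^ 2) := fun t k => by
    rw [← exp_add]; ring_nf
  have hlim := tendsto_tsum_mul_exp_neg_mul_atTop (a := a) intCast_mul_add_one_nonneg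
    (by simpa only [hexp, mul_left_comm (rexp _)] using ha.mul_left (rexp (1 / 4)))
  have hsum : ∑' k : ℤ, (if (k : ℝ) * (k + 1) = 0 then a k else 0) = a 0 + a (-1) := by
    rw [tsum_eq_sum (s := {0, -1}) fun k hk => if_neg ?_]
    · simp
    · simp only [Finset.mem_insert, Finset.mem_singleton, not_or, ← add_eq_zero_iff_eq_neg] at hk
      exact_mod_cast mul_ne_zero hk.1 hk.2
  rw [hsum] at hlim
  simpa only [hexp, ← tsum_mul_left, mul_left_comm (rexp _)] using hlim

lemma tendsto_logDeriv_theta₂ : Tendsto (logDeriv theta₂) atTop (𝓝 (-1 / 4)) := by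
  have hsum : Summable fun k : ℤ =>
      |-((k : ℝ) + 1 / 2) ^ 2| * rexp (-1 * ((k : ℝ) + 1 / 2) ^ 2) := by
    simpa only [abs_neg, abs_sq] using
      summable_mul_exp_neg_mul (fun k : ℤ => sq_nonneg ((k : ℝ) + 1 / 2))
        (fun s hs => summable_exp_neg_mul_add_sq hs _) one_pos
  have hval := tendsto_exp_mul_tsum_mul_exp_neg_mul_add_half_sq (a := fun _ => 1)
    (by simpa using summable_exp_neg_mul_add_sq one_pos (1 / 2))
  have hderiv := tendsto_exp_mul_tsum_mul_exp_neg_mul_add_half_sq hsum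
  refine Tendsto.congr' ?_ ((hderiv.div hval (by norm_num)).mono_right (by norm_num))
  filter_upwards [eventually_gt_atTop 0] with t ht
  rw [logDeriv_apply, (hasDerivAt_theta₂ ht).deriv, Pi.div_apply,
    mul_div_mul_left _ _ (exp_ne_zero _)]
  simp only [one_mul, theta₂]

/-! ### The modulus and its differential equation -/

/-- The ratio `θ₂ / θ₃`, the square root of the elliptic modulus. -/
noncomputable def sqrtModulus (t : ℝ) : ℝ := theta₂ t / theta₃ t

/-- The ratio `θ₄ / θ₃`, the square root of the complementary modulus. -/
noncomputable def sqrtComplModulus (t : ℝ) : ℝ := theta₄ t / theta₃ t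

lemma sqrtModulus_pos (ht : 0 < t) : 0 < sqrtModulus t := div_pos (theta₂_pos ht) (theta₃_pos ht)

lemma sqrtComplModulus_pos (ht : 0 < t) : 0 < sqrtComplModulus t :=
  div_pos (theta₄_pos ht) (theta₃_pos ht)

lemma sqrtModulus_pow_four_add (ht : 0 < t) : sqrtModulus t ^ 4 + sqrtComplModulus t ^ 4 = 1 := by
  rw [sqrtModulus, sqrtComplModulus, div_pow, div_pow, ← add_div, ← theta₃_pow_four ht,
    div_self (pow_pos (theta₃_pos ht) 4).ne']

lemma sqrtModulus_mul_add (ht : 0 < t) :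
    sqrtModulus t * sqrtModulus (3 * t) + sqrtComplModulus t * sqrtComplModulus (3 * t) = 1 := by
  have h1 := theta₃_pos ht
  have h3 := theta₃_pos (mul_pos three_pos ht)
  rw [sqrtModulus, sqrtModulus, sqrtComplModulus, sqrtComplModulus]
  field_simp
  linear_combination -theta₃_mul_sub_theta₄_mul ht

lemma sqrtModulus_sq_mul (ht : 0 < t) :
    sqrtModulus t ^ 2 * (1 + sqrtModulus (2 * t) ^ 2) = 2 * sqrtModulus (2 * t) := by
  have h1 := theta₃_pos ht
  have h2 := theta₃_pos (mul_pos two_pos ht)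
  rw [sqrtModulus, sqrtModulus]
  field_simp
  rw [theta₂_sq ht, theta₃_sq ht]
  ring

lemma sqrtComplModulus_sq_mul (ht : 0 < t) :
    sqrtComplModulus t ^ 2 * (1 + sqrtModulus (2 * t) ^ 2) = 1 - sqrtModulus (2 * t) ^ 2 := by
  have h1 := theta₃_pos ht
  have h2 := theta₃_pos (mul_pos two_pos ht)
  rw [sqrtModulus, sqrtComplModulus]
  field_simp
  rw [theta₄_sq ht, theta₃_sq ht]
  ring

lemma differentiableAt_sqrtModulus (ht : 0 < t) : DifferentiableAt ℝ sqrtModulus t :=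
  (hasDerivAt_theta₂ ht).differentiableAt.div (hasDerivAt_theta₃ ht).differentiableAt
    (theta₃_pos ht).ne'

lemma logDeriv_sqrtModulus (ht : 0 < t) :
    logDeriv sqrtModulus t = logDeriv sqrtModulus (2 * t) * sqrtComplModulus t ^ 2 := by
  have h2t := mul_pos two_pos ht
  have hρ := sqrtModulus_pos ht
  have hR := sqrtModulus_pos h2t
  have hderiv := (differentiableAt_sqrtModulus ht).hasDerivAt
  have hderiv2 : HasDerivAt (fun s => sqrtModulus (2 * s)) (deriv sqrtModulus (2 * t) * 2) t :=
    (differentiableAt_sqrtModulus h2t).hasDerivAt.comp t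
      (by simpa using (hasDerivAt_id t).const_mul 2)
  have heq : (fun s => sqrtModulus s ^ 2 * (1 + sqrtModulus (2 * s) ^ 2)) =ᶠ[𝓝 t]
      fun s => 2 * sqrtModulus (2 * s) :=
    (eventually_gt_nhds ht).mono fun s hs => sqrtModulus_sq_mul hs
  have hdiff := ((hderiv.pow 2).mul ((hderiv2.pow 2).const_add 1)).unique
    ((hderiv2.const_mul 2).congr_of_eventuallyEq heq)
  simp only [Pi.pow_apply, Nat.cast_ofNat] at hdiff
  have hval := sqrtModulus_sq_mul ht
  have hcompl := sqrtComplModulus_sq_mul ht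
  rw [logDeriv_apply, logDeriv_apply, div_mul_eq_mul_div, div_eq_div_iff hρ.ne' hR.ne']
  refine mul_left_cancel₀ (mul_pos hρ (by positivity : 0 < 1 + sqrtModulus (2 * t) ^ 2)).ne' ?_
  linear_combination sqrtModulus (2 * t) / 2 * hdiff - deriv sqrtModulus (2 * t) * hval -
    sqrtModulus t ^ 2 * deriv sqrtModulus (2 * t) * hcompl

lemma eq_of_tendsto_of_two_mul {f : ℝ → ℝ} {l : ℝ} (hf : ∀ s > 0, f (2 * s) = f s)
    (hlim : Tendsto f atTop (𝓝 l)) (ht : 0 < t) : f t = l := by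
  have hpow : ∀ n : ℕ, f (2 ^ n * t) = f t := fun n => by
    induction n with
    | zero => simp
    | succ n ih => rw [pow_succ', mul_assoc, hf _ (by positivity), ih]
  have hseq : Tendsto (fun n : ℕ => (2 : ℝ) ^ n * t) atTop atTop :=
    (tendsto_pow_atTop_atTop_of_one_lt one_lt_two).atTop_mul_const ht
  exact tendsto_nhds_unique (tendsto_const_nhds.congr fun n => (hpow n).symm) (hlim.comp hseq)

/-- The quotient `(log (θ₂ / θ₃))' / θ₄⁴` is invariant under `t ↦ 2 t`, so it equals its limit at
infinity. -/
lemma hasDerivAt_sqrtModulus (ht : 0 < t) :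
    HasDerivAt sqrtModulus (-(sqrtModulus t * theta₄ t ^ 4 / 4)) t := by
  have hinv : ∀ s > 0, logDeriv sqrtModulus (2 * s) / theta₄ (2 * s) ^ 4 =
      logDeriv sqrtModulus s / theta₄ s ^ 4 := fun s hs => by
    have h₃ := theta₃_pos hs
    have h₄ := theta₄_pos hs
    rw [logDeriv_sqrtModulus hs, show theta₄ (2 * s) ^ 4 = (theta₄ (2 * s) ^ 2) ^ 2 by ring,
      ← theta₃_mul_theta₄ hs, sqrtComplModulus]
    field_simp
  have hlim : Tendsto (fun s => logDeriv sqrtModulus s / theta₄ s ^ 4) atTop (𝓝 (-1 / 4)) := by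
    have hsub := tendsto_logDeriv_theta₂.sub tendsto_logDeriv_theta₃
    have hdiv := hsub.div (tendsto_theta₄.pow 4) (by norm_num)
    rw [sub_zero, one_pow, div_one] at hdiv
    refine hdiv.congr' ?_
    filter_upwards [eventually_gt_atTop 0] with s hs
    have hlog : logDeriv sqrtModulus s = logDeriv theta₂ s - logDeriv theta₃ s :=
      logDeriv_div s (theta₂_pos hs).ne' (theta₃_pos hs).ne'
        (hasDerivAt_theta₂ hs).differentiableAt (hasDerivAt_theta₃ hs).differentiableAt
    rw [hlog, Pi.div_apply]
  have hval := eq_of_tendsto_of_two_mul hinv hlim ht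
  refine (differentiableAt_sqrtModulus ht).hasDerivAt.congr_deriv ?_
  rw [div_eq_iff (pow_pos (theta₄_pos ht) 4).ne', logDeriv_apply,
    div_eq_iff (sqrtModulus_pos ht).ne'] at hval
  rw [hval]
  ring

lemma strictAntiOn_sqrtModulus : StrictAntiOn sqrtModulus (Set.Ioi 0) := by
  refine strictAntiOn_of_hasDerivWithinAt_neg (convex_Ioi 0)
    (fun s hs => (hasDerivAt_sqrtModulus hs).continuousAt.continuousWithinAt)
    (fun s hs => (hasDerivAt_sqrtModulus (interior_subset hs)).hasDerivWithinAt) fun s hs => ?_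
  have hs' : 0 < s := interior_subset hs
  have hρ := sqrtModulus_pos hs'
  have h₄ := theta₄_pos hs'
  exact neg_lt_zero.2 (by positivity)

end Theta

/-! ### The modular equation of degree three -/

section CubicModularEquation

variable {t : ℝ}

lemma sq_sub_sq_eq_two_mul_sqrt_mul {a b : ℝ} (hb : 0 < b) (hba : b < a) (hab : a * b < 1)
    (h : (1 - a ^ 4) * (1 - b ^ 4) = (1 - a * b) ^ 4) :
    a ^ 2 - b ^ 2 = 2 * √(a * b) * (1 - a * b) := by
  have hsqrt : √(a * b) ^ 2 = a * b := sq_sqrt (mul_pos (hb.trans hba) hb).le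
  have hleft : 0 ≤ a ^ 2 - b ^ 2 := sub_nonneg.2 (pow_le_pow_left₀ hb.le hba.le 2)
  have hright : 0 ≤ 2 * √(a * b) * (1 - a * b) :=
    mul_nonneg (by positivity) (sub_nonneg.2 hab.le)
  refine (pow_left_inj₀ hleft hright two_ne_zero).1 ?_
  linear_combination -h - 4 * (1 - a * b) ^ 2 * hsqrt

lemma mul_mul_one_add_two_mul_eq {a b p : ℝ} (hb : 0 < b) (hba : b < a) (hab : a * b < 1)
    (h : (1 - a ^ 4) * (1 - b ^ 4) = (1 - a * b) ^ 4) (hp : 0 < p) (hpab : p ^ 2 * a = b ^ 3) :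
    a * b * (1 + 2 * p) = p * (2 + p) := by
  have ha := hb.trans hba
  have hw : 0 < √(a * b) := sqrt_pos.2 (mul_pos ha hb)
  have hsqrt : √(a * b) ^ 2 = a * b := sq_sqrt (mul_pos ha hb).le
  have hbsq : b ^ 2 = p * √(a * b) := by
    refine (pow_left_inj₀ (sq_nonneg b) (by positivity) two_ne_zero).1 ?_
    linear_combination -b * hpab - p ^ 2 * hsqrt
  have hasq : p * a ^ 2 = √(a * b) ^ 3 := by
    refine mul_right_cancel₀ hw.ne' ?_
    linear_combination -a ^ 2 * hbsq - (√(a * b) ^ 2 + a * b) * hsqrt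
  have hdiff := sq_sub_sq_eq_two_mul_sqrt_mul hb hba hab h
  refine mul_left_cancel₀ hw.ne' ?_
  linear_combination p * hdiff - hasq + p * hbsq - √(a * b) * hsqrt

/-- Ramanujan's parameter `p` of the degree three modular equation, normalised by
`p² = ρ(3t)³ / ρ(t)` where `ρ` is `sqrtModulus`; every modulus and multiplier of degree three is a
rational function of it. -/
noncomputable def cubicParam (t : ℝ) : ℝ := √(sqrtModulus (3 * t) ^ 3 / sqrtModulus t)

lemma cubicParam_pos (ht : 0 < t) : 0 < cubicParam t :=
  sqrt_pos.2 (div_pos (pow_pos (sqrtModulus_pos (mul_pos three_pos ht)) 3) (sqrtModulus_pos ht))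

lemma cubicParam_sq_mul (ht : 0 < t) :
    cubicParam t ^ 2 * sqrtModulus t = sqrtModulus (3 * t) ^ 3 := by
  have hρ := sqrtModulus_pos ht
  have hρ₃ := sqrtModulus_pos (mul_pos three_pos ht)
  rw [cubicParam, sq_sqrt (by positivity), div_mul_cancel₀ _ hρ.ne']

lemma sqrtModulus_three_mul_lt (ht : 0 < t) : sqrtModulus (3 * t) < sqrtModulus t :=
  strictAntiOn_sqrtModulus ht (mul_pos three_pos ht) (by linarith)

lemma sqrtModulus_lt_one (ht : 0 < t) : sqrtModulus t < 1 := by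
  refine lt_of_pow_lt_pow_left₀ 4 zero_le_one ?_
  linarith [sqrtModulus_pow_four_add ht, pow_pos (sqrtComplModulus_pos ht) 4]

lemma cubicParam_lt_one (ht : 0 < t) : cubicParam t < 1 := by
  have h3t := mul_pos three_pos ht
  have hρ := sqrtModulus_pos ht
  refine lt_of_pow_lt_pow_left₀ 2 zero_le_one (lt_of_mul_lt_mul_right ?_ hρ.le)
  calc cubicParam t ^ 2 * sqrtModulus t = sqrtModulus (3 * t) ^ 3 := cubicParam_sq_mul ht
    _ ≤ sqrtModulus (3 * t) :=
      pow_le_of_le_one (sqrtModulus_pos h3t).le (sqrtModulus_lt_one h3t).le three_ne_zero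
    _ < 1 ^ 2 * sqrtModulus t := by simpa using sqrtModulus_three_mul_lt ht

lemma sqrtModulus_mul_sqrtModulus_three_mul (ht : 0 < t) :
    sqrtModulus t * sqrtModulus (3 * t) * (1 + 2 * cubicParam t) =
      cubicParam t * (2 + cubicParam t) := by
  have h3t := mul_pos three_pos ht
  have hcubic := sqrtModulus_mul_add ht
  have hσ := mul_pos (sqrtComplModulus_pos ht) (sqrtComplModulus_pos h3t)
  refine mul_mul_one_add_two_mul_eq (sqrtModulus_pos h3t) (sqrtModulus_three_mul_lt ht)
    (by linarith) ?_ (cubicParam_pos ht) (cubicParam_sq_mul ht)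
  rw [← eq_sub_of_add_eq' (sqrtModulus_pow_four_add ht),
    ← eq_sub_of_add_eq' (sqrtModulus_pow_four_add h3t), ← eq_sub_of_add_eq' hcubic, mul_pow]

lemma sqrtModulus_pow_four_mul (ht : 0 < t) :
    sqrtModulus t ^ 4 * (1 + 2 * cubicParam t) ^ 3 = cubicParam t * (2 + cubicParam t) ^ 3 := by
  refine mul_left_cancel₀ (pow_pos (cubicParam_pos ht) 2).ne' ?_
  calc cubicParam t ^ 2 * (sqrtModulus t ^ 4 * (1 + 2 * cubicParam t) ^ 3)
      = (sqrtModulus t * sqrtModulus (3 * t) * (1 + 2 * cubicParam t)) ^ 3 := by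
        linear_combination sqrtModulus t ^ 3 * (1 + 2 * cubicParam t) ^ 3 * cubicParam_sq_mul ht
    _ = cubicParam t ^ 2 * (cubicParam t * (2 + cubicParam t) ^ 3) := by
        rw [sqrtModulus_mul_sqrtModulus_three_mul ht]; ring

lemma sqrtComplModulus_pow_four_mul (ht : 0 < t) :
    sqrtComplModulus t ^ 4 * (1 + 2 * cubicParam t) ^ 3 =
      (1 + cubicParam t) * (1 - cubicParam t) ^ 3 := by
  linear_combination (1 + 2 * cubicParam t) ^ 3 * sqrtModulus_pow_four_add ht -
    sqrtModulus_pow_four_mul ht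

lemma sqrtComplModulus_mul_sqrtComplModulus_three_mul (ht : 0 < t) :
    sqrtComplModulus t * sqrtComplModulus (3 * t) * (1 + 2 * cubicParam t) =
      1 - cubicParam t ^ 2 := by
  linear_combination (1 + 2 * cubicParam t) * sqrtModulus_mul_add ht -
    sqrtModulus_mul_sqrtModulus_three_mul ht

lemma hasDerivAt_cubicParam (ht : 0 < t) :
    HasDerivAt cubicParam
      (cubicParam t * (theta₄ t ^ 4 - 9 * theta₄ (3 * t) ^ 4) / 8) t := by
  have h3t := mul_pos three_pos ht
  have hρ := sqrtModulus_pos ht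
  have hρ₃ := sqrtModulus_pos h3t
  have htriple : HasDerivAt (fun s => sqrtModulus (3 * s))
      (-(sqrtModulus (3 * t) * theta₄ (3 * t) ^ 4 / 4) * 3) t :=
    (hasDerivAt_sqrtModulus h3t).comp t (by simpa using (hasDerivAt_id t).const_mul 3)
  have hquot := (htriple.pow 3).div (hasDerivAt_sqrtModulus ht) hρ.ne'
  refine (hquot.sqrt (div_pos (pow_pos hρ₃ 3) hρ).ne').congr_deriv ?_
  have hsq : √(sqrtModulus (3 * t) ^ 3 / sqrtModulus t) ^ 2 * sqrtModulus t =
    sqrtModulus (3 * t) ^ 3 := cubicParam_sq_mul ht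
  simp only [Pi.pow_apply, Pi.div_apply, Nat.cast_ofNat, cubicParam]
  field_simp
  linear_combination -8 * (theta₄ t ^ 4 - 9 * theta₄ (3 * t) ^ 4) * hsq

lemma deriv_cubicParam_mul (ht : 0 < t) :
    deriv cubicParam t * (2 * (1 - cubicParam t) ^ 2) =
      -(theta₄ t ^ 4 * cubicParam t * (2 + cubicParam t) * (1 + 2 * cubicParam t)) := by
  have hp := cubicParam_pos ht
  have hparam := (hasDerivAt_cubicParam ht).differentiableAt.hasDerivAt
  have heq : (fun s => sqrtModulus s ^ 4 * (1 + 2 * cubicParam s) ^ 3) =ᶠ[𝓝 t]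
      fun s => cubicParam s * (2 + cubicParam s) ^ 3 :=
    (eventually_gt_nhds ht).mono fun s hs => sqrtModulus_pow_four_mul hs
  have hdiff := (((hasDerivAt_sqrtModulus ht).pow 4).mul
    (((hparam.const_mul 2).const_add 1).pow 3)).unique
    ((hparam.mul ((hparam.const_add 2).pow 3)).congr_of_eventuallyEq heq)
  simp only [Pi.pow_apply, Nat.cast_ofNat] at hdiff
  have hval := sqrtModulus_pow_four_mul ht
  refine mul_left_cancel₀ (by positivity : (2 + cubicParam t) ^ 2 ≠ 0) ?_
  linear_combination -(1 + 2 * cubicParam t) * hdiff +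
    (6 * deriv cubicParam t - theta₄ t ^ 4 * (1 + 2 * cubicParam t)) * hval

lemma one_add_cubicParam_mul_theta₄_sq (ht : 0 < t) :
    (1 + cubicParam t) * theta₄ t ^ 2 = (1 - cubicParam t) * theta₄ (3 * t) ^ 2 := by
  have hp := cubicParam_pos ht
  have hp1 := sub_pos.2 (cubicParam_lt_one ht)
  have hderiv := deriv_cubicParam_mul ht
  rw [(hasDerivAt_cubicParam ht).deriv] at hderiv
  refine (pow_left_inj₀ (by positivity) (by positivity) two_ne_zero).1
    (mul_left_cancel₀ hp.ne' ?_)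
  linear_combination 4 / 9 * hderiv

lemma theta₃_sq_eq_mul_theta₃_three_mul_sq (ht : 0 < t) :
    theta₃ t ^ 2 = (1 + 2 * cubicParam t) * theta₃ (3 * t) ^ 2 := by
  have h3t := mul_pos three_pos ht
  have hp := cubicParam_pos ht
  have h₃ := theta₃_pos ht
  have h₃' := theta₃_pos h3t
  have hσ := sqrtComplModulus_pos ht
  have hratio : sqrtComplModulus t ^ 2 * ((1 + cubicParam t) * (1 + 2 * cubicParam t)) =
      (1 - cubicParam t) * sqrtComplModulus (3 * t) ^ 2 := by
    refine mul_left_cancel₀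
      (by positivity : sqrtComplModulus t ^ 2 * (1 + 2 * cubicParam t) ^ 2 ≠ 0) ?_
    linear_combination (1 + cubicParam t) * sqrtComplModulus_pow_four_mul ht - (1 - cubicParam t) *
      (sqrtComplModulus t * sqrtComplModulus (3 * t) * (1 + 2 * cubicParam t) +
        (1 - cubicParam t ^ 2)) * sqrtComplModulus_mul_sqrtComplModulus_three_mul ht
  have h₄ : theta₄ t = sqrtComplModulus t * theta₃ t := (div_mul_cancel₀ _ h₃.ne').symm
  have h₄' : theta₄ (3 * t) = sqrtComplModulus (3 * t) * theta₃ (3 * t) :=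
    (div_mul_cancel₀ _ h₃'.ne').symm
  have hmult := one_add_cubicParam_mul_theta₄_sq ht
  rw [h₄, h₄'] at hmult
  refine mul_left_cancel₀ (by positivity : (1 + cubicParam t) * sqrtComplModulus t ^ 2 ≠ 0) ?_
  linear_combination hmult - theta₃ (3 * t) ^ 2 * hratio

/-- The quotient `θ₂(3t)² / θ₂(t)²`, whose square is the antiderivative `V2` at `exp (-2t)`. -/
noncomputable def theta₂SqRatio (t : ℝ) : ℝ := theta₂ (3 * t) ^ 2 / theta₂ t ^ 2

lemma theta₂SqRatio_pos (ht : 0 < t) : 0 < theta₂SqRatio t :=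
  div_pos (pow_pos (theta₂_pos (mul_pos three_pos ht)) 2) (pow_pos (theta₂_pos ht) 2)

lemma theta₂SqRatio_eq_cubicParam_div (ht : 0 < t) :
    theta₂SqRatio t = cubicParam t / (2 + cubicParam t) := by
  have h3t := mul_pos three_pos ht
  have hp := cubicParam_pos ht
  have h₃ := theta₃_pos ht
  have h₃' := theta₃_pos h3t
  have hρ := sqrtModulus_pos ht
  have hρ₃ := sqrtModulus_pos h3t
  have h₂ : theta₂ t = sqrtModulus t * theta₃ t := (div_mul_cancel₀ _ h₃.ne').symm
  have h₂' : theta₂ (3 * t) = sqrtModulus (3 * t) * theta₃ (3 * t) :=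
    (div_mul_cancel₀ _ h₃'.ne').symm
  rw [theta₂SqRatio, h₂, h₂', mul_pow, mul_pow, theta₃_sq_eq_mul_theta₃_three_mul_sq ht,
    div_eq_div_iff (by positivity) (by positivity)]
  refine mul_left_cancel₀ hρ₃.ne' ?_
  linear_combination -(theta₃ (3 * t) ^ 2 * (2 + cubicParam t)) * cubicParam_sq_mul ht -
    theta₃ (3 * t) ^ 2 * cubicParam t * sqrtModulus t * sqrtModulus_mul_sqrtModulus_three_mul ht

lemma theta₂SqRatio_lt_one_third (ht : 0 < t) : theta₂SqRatio t < 1 / 3 := by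
  have hp := cubicParam_pos ht
  rw [theta₂SqRatio_eq_cubicParam_div ht, div_lt_iff₀ (by positivity)]
  linarith [cubicParam_lt_one ht]

lemma cubicParam_eq_theta₂SqRatio_div (ht : 0 < t) :
    cubicParam t = 2 * theta₂SqRatio t / (1 - theta₂SqRatio t) := by
  have hs : 1 - theta₂SqRatio t ≠ 0 := by linarith [theta₂SqRatio_lt_one_third ht]
  have hp := cubicParam_pos ht
  have h := theta₂SqRatio_eq_cubicParam_div ht
  rw [eq_div_iff (by positivity)] at h
  rw [eq_div_iff hs]
  linear_combination -h

lemma one_sub_theta₂SqRatio_mul_theta₃_sq (ht : 0 < t) :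
    (1 - theta₂SqRatio t) * theta₃ t ^ 2 = (1 + 3 * theta₂SqRatio t) * theta₃ (3 * t) ^ 2 := by
  have hs : 0 < 1 - theta₂SqRatio t := by linarith [theta₂SqRatio_lt_one_third ht]
  rw [theta₃_sq_eq_mul_theta₃_three_mul_sq ht, cubicParam_eq_theta₂SqRatio_div ht]
  field_simp
  ring

lemma one_add_theta₂SqRatio_mul_theta₄_sq (ht : 0 < t) :
    (1 + theta₂SqRatio t) * theta₄ t ^ 2 = (1 - 3 * theta₂SqRatio t) * theta₄ (3 * t) ^ 2 := by
  have hs : 0 < 1 - theta₂SqRatio t := by linarith [theta₂SqRatio_lt_one_third ht]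
  have h := one_add_cubicParam_mul_theta₄_sq ht
  rw [cubicParam_eq_theta₂SqRatio_div ht] at h
  field_simp at h
  linear_combination h

lemma sqrtModulus_pow_four_mul_theta₂SqRatio (ht : 0 < t) :
    sqrtModulus t ^ 4 * ((1 - theta₂SqRatio t) * (1 + 3 * theta₂SqRatio t) ^ 3) =
      16 * theta₂SqRatio t := by
  have hs : 0 < 1 - theta₂SqRatio t := by linarith [theta₂SqRatio_lt_one_third ht]
  have h := sqrtModulus_pow_four_mul ht
  rw [cubicParam_eq_theta₂SqRatio_div ht] at h
  field_simp at h
  linear_combination h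

lemma hasDerivAt_theta₂SqRatio (ht : 0 < t) :
    HasDerivAt theta₂SqRatio
      (-(theta₂SqRatio t * (theta₃ t * theta₄ t * (theta₃ (3 * t) * theta₄ (3 * t))))) t := by
  have hp := cubicParam_pos ht
  have hp1 := sub_pos.2 (cubicParam_lt_one ht)
  have h₃ := theta₃_pos ht
  have h₃' := theta₃_pos (mul_pos three_pos ht)
  have hparam := (hasDerivAt_cubicParam ht).differentiableAt.hasDerivAt
  have heq : theta₂SqRatio =ᶠ[𝓝 t] fun s => cubicParam s / (2 + cubicParam s) :=
    (eventually_gt_nhds ht).mono fun s hs => theta₂SqRatio_eq_cubicParam_div hs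
  have hcompl := sqrtComplModulus_mul_sqrtComplModulus_three_mul ht
  rw [sqrtComplModulus, sqrtComplModulus] at hcompl
  field_simp at hcompl
  have hprod : theta₃ t * theta₄ t * (theta₃ (3 * t) * theta₄ (3 * t)) =
      theta₄ t ^ 4 * (1 + 2 * cubicParam t) / (1 - cubicParam t) ^ 2 := by
    rw [eq_div_iff (by positivity)]
    refine mul_left_cancel₀ (by positivity : 1 + cubicParam t ≠ 0) ?_
    linear_combination -(1 - cubicParam t) * theta₄ t * theta₄ (3 * t) * hcompl -
      (1 + 2 * cubicParam t) * theta₄ t ^ 2 * one_add_cubicParam_mul_theta₄_sq ht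
  have hderiv : deriv cubicParam t = -(theta₄ t ^ 4 * cubicParam t * (2 + cubicParam t) *
      (1 + 2 * cubicParam t)) / (2 * (1 - cubicParam t) ^ 2) :=
    (eq_div_iff (by positivity)).2 (deriv_cubicParam_mul ht)
  refine ((hparam.div (hparam.const_add 2) (by positivity)).congr_of_eventuallyEq
    heq).congr_deriv ?_
  rw [hderiv, hprod, theta₂SqRatio_eq_cubicParam_div ht]
  field_simp
  ring

end CubicModularEquation

/-! ### The integral evaluation -/

section Antiderivative

variable {q t : ℝ}

lemma hasProd_eulerFunction_pow (hq0 : 0 ≤ q) (hq1 : q < 1) {k : ℕ} (hk : k ≠ 0) :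
    HasProd (fun j : ℕ => 1 - q ^ (k * (j + 1))) (eulerFunction (q ^ k)) := by
  have hqk : ‖q ^ k‖ < 1 := by
    rw [norm_of_nonneg (pow_nonneg hq0 k)]
    exact pow_lt_one₀ hq0 hq1 hk
  simpa only [← pow_mul] using hasProd_eulerFunction hqk

lemma eulerFunction_pow_pos (hq0 : 0 ≤ q) (hq1 : q < 1) {k : ℕ} (hk : k ≠ 0) :
    0 < eulerFunction (q ^ k) :=
  eulerFunction_pos (pow_nonneg hq0 k) (pow_lt_one₀ hq0 hq1 hk)

lemma U2_eq_eulerFunction (hq0 : 0 ≤ q) (hq1 : q < 1) :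
    U2 q = eulerFunction q ^ 8 * eulerFunction (q ^ 6) ^ 6 / eulerFunction (q ^ 2) ^ 10 := by
  have h1 := hasProd_eulerFunction ((norm_of_nonneg hq0).trans_lt hq1)
  have h2 := hasProd_eulerFunction_pow hq0 hq1 two_ne_zero
  have h6 := hasProd_eulerFunction_pow hq0 hq1 (k := 6) (by norm_num)
  have hE2 := eulerFunction_pow_pos hq0 hq1 two_ne_zero
  exact (((h1.pow 8).mul (h6.pow 6)).div₀ (h2.pow 10) (by positivity)).tprod_eq

lemma V2_eq_eulerFunction (hq0 : 0 ≤ q) (hq1 : q < 1) :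
    V2 q = q * (eulerFunction q ^ 4 * eulerFunction (q ^ 6) ^ 8 /
      (eulerFunction (q ^ 2) ^ 8 * eulerFunction (q ^ 3) ^ 4)) := by
  have h1 := hasProd_eulerFunction ((norm_of_nonneg hq0).trans_lt hq1)
  have h2 := hasProd_eulerFunction_pow hq0 hq1 two_ne_zero
  have h3 := hasProd_eulerFunction_pow hq0 hq1 three_ne_zero
  have h6 := hasProd_eulerFunction_pow hq0 hq1 (k := 6) (by norm_num)
  have hE2 := eulerFunction_pow_pos hq0 hq1 two_ne_zero
  have hE3 := eulerFunction_pow_pos hq0 hq1 three_ne_zero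
  rw [V2, (((h1.pow 4).mul (h6.pow 8)).div₀ ((h2.pow 8).mul (h3.pow 4)) (by positivity)).tprod_eq]

lemma U2_nonneg (hq0 : 0 ≤ q) (hq1 : q < 1) : 0 ≤ U2 q := by
  have hE := eulerFunction_pos hq0 hq1
  have hE2 := eulerFunction_pow_pos hq0 hq1 two_ne_zero
  have hE6 := eulerFunction_pow_pos hq0 hq1 (k := 6) (by norm_num)
  rw [U2_eq_eulerFunction hq0 hq1]
  positivity

lemma exp_neg_two_mul_lt_one (ht : 0 < t) : rexp (-2 * t) < 1 :=
  exp_lt_one_iff.2 (by linarith)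

lemma exp_neg_two_mul_pow (t : ℝ) (k : ℕ) : rexp (-2 * t) ^ k = rexp (-(2 * k) * t) := by
  rw [← exp_nat_mul]
  ring_nf

lemma V2_exp_neg_two_mul (ht : 0 < t) : V2 (rexp (-2 * t)) = theta₂SqRatio t ^ 2 := by
  have hq0 := exp_pos (-2 * t)
  have hq1 := exp_neg_two_mul_lt_one ht
  have hE1 := eulerFunction_pos hq0.le hq1
  have hE2 := eulerFunction_pow_pos hq0.le hq1 two_ne_zero
  have hE3 := eulerFunction_pow_pos hq0.le hq1 three_ne_zero
  have hE6 := eulerFunction_pow_pos hq0.le hq1 (k := 6) (by norm_num)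
  have h₂ : theta₂ t = 2 * rexp (-t / 4) *
      (eulerFunction (rexp (-2 * t) ^ 2) ^ 2 / eulerFunction (rexp (-2 * t))) := by
    rw [theta₂_eq_eulerFunction ht, exp_neg_two_mul_pow]
    norm_num
  have h₂' : theta₂ (3 * t) = 2 * rexp (-t / 4) ^ 3 *
      (eulerFunction (rexp (-2 * t) ^ 6) ^ 2 / eulerFunction (rexp (-2 * t) ^ 3)) := by
    rw [theta₂_eq_eulerFunction (mul_pos three_pos ht), exp_neg_two_mul_pow,
      exp_neg_two_mul_pow, ← exp_nat_mul]
    ring_nf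
  have hq : rexp (-t / 4) ^ 8 = rexp (-2 * t) := by
    rw [← exp_nat_mul]
    ring_nf
  rw [V2_eq_eulerFunction hq0.le hq1, theta₂SqRatio, h₂, h₂']
  generalize rexp (-2 * t) = q at *
  field_simp
  rw [neg_div] at hq
  rw [hq]

lemma mul_U2_exp_neg_two_mul (ht : 0 < t) :
    rexp (-2 * t) * U2 (rexp (-2 * t)) = V2 (rexp (-2 * t)) *
      (theta₃ t * theta₄ t * (theta₃ (3 * t) * theta₄ (3 * t))) := by
  have h3t := mul_pos three_pos ht
  have hq0 := exp_pos (-2 * t)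
  have hq1 := exp_neg_two_mul_lt_one ht
  have hE1 := eulerFunction_pos hq0.le hq1
  have hE2 := eulerFunction_pow_pos hq0.le hq1 two_ne_zero
  have hE3 := eulerFunction_pow_pos hq0.le hq1 three_ne_zero
  have hE6 := eulerFunction_pow_pos hq0.le hq1 (k := 6) (by norm_num)
  have h₄ : theta₄ (2 * t) = eulerFunction (rexp (-2 * t)) ^ 2 /
      eulerFunction (rexp (-2 * t) ^ 2) := by
    rw [theta₄_eq_eulerFunction (mul_pos two_pos ht), exp_neg_two_mul_pow]
    ring_nf
  have h₄' : theta₄ (2 * (3 * t)) = eulerFunction (rexp (-2 * t) ^ 3) ^ 2 /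
      eulerFunction (rexp (-2 * t) ^ 6) := by
    rw [theta₄_eq_eulerFunction (mul_pos two_pos h3t), exp_neg_two_mul_pow, exp_neg_two_mul_pow]
    ring_nf
  rw [theta₃_mul_theta₄ ht, theta₃_mul_theta₄ h3t, h₄, h₄', V2_eq_eulerFunction hq0.le hq1,
    U2_eq_eulerFunction hq0.le hq1]
  generalize rexp (-2 * t) = q at *
  field_simp

lemma exp_neg_two_mul_neg_log_div_two (hq : 0 < q) : rexp (-2 * (-log q / 2)) = q := by
  rw [show -2 * (-log q / 2) = log q by ring, exp_log hq]

lemma neg_log_div_two_pos (hq0 : 0 < q) (hq1 : q < 1) : 0 < -log q / 2 :=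
  half_pos (neg_pos.2 (log_neg hq0 hq1))

lemma V2_eq_theta₂SqRatio_sq (hq0 : 0 < q) (hq1 : q < 1) :
    V2 q = theta₂SqRatio (-log q / 2) ^ 2 := by
  rw [← V2_exp_neg_two_mul (neg_log_div_two_pos hq0 hq1), exp_neg_two_mul_neg_log_div_two hq0]

lemma hasDerivAt_V2 (hq0 : 0 < q) (hq1 : q < 1) : HasDerivAt V2 (U2 q) q := by
  have ht := neg_log_div_two_pos hq0 hq1
  have hlog : HasDerivAt (fun x => -log x / 2) (-q⁻¹ / 2) q :=
    (hasDerivAt_log hq0.ne').neg.div_const 2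
  have heq : V2 =ᶠ[𝓝 q] fun x => theta₂SqRatio (-log x / 2) ^ 2 := by
    filter_upwards [eventually_gt_nhds hq0, eventually_lt_nhds hq1] with x hx0 hx1
    exact V2_eq_theta₂SqRatio_sq hx0 hx1
  refine ((((hasDerivAt_theta₂SqRatio ht).comp q hlog).pow 2).congr_of_eventuallyEq
    heq).congr_deriv ?_
  have hU2 := mul_U2_exp_neg_two_mul ht
  rw [V2_exp_neg_two_mul ht, exp_neg_two_mul_neg_log_div_two hq0] at hU2
  refine mul_left_cancel₀ hq0.ne' ?_
  rw [hU2]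
  simp only [Function.comp_apply, Nat.cast_ofNat]
  field_simp
  ring

lemma theta₂_three_mul_le (ht : 0 < t) : theta₂ (3 * t) ≤ rexp (-t / 2) * theta₂ t := by
  rw [theta₂, theta₂, ← tsum_mul_left]
  refine Summable.tsum_le_tsum (fun k => ?_)
    (summable_exp_neg_mul_add_sq (mul_pos three_pos ht) (1 / 2))
    ((summable_exp_neg_mul_add_sq ht (1 / 2)).mul_left _)
  rw [← exp_add, exp_le_exp]
  linarith [mul_nonneg ht.le (intCast_mul_add_one_nonneg k)]

lemma theta₂SqRatio_sq_le (ht : 0 < t) : theta₂SqRatio t ^ 2 ≤ rexp (-2 * t) := by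
  have hexp : rexp (-t / 2) ^ 4 = rexp (-2 * t) := by
    rw [← exp_nat_mul]
    ring_nf
  rw [theta₂SqRatio, ← div_pow, ← pow_mul, div_pow, div_le_iff₀ (pow_pos (theta₂_pos ht) _),
    ← hexp, ← mul_pow]
  exact pow_le_pow_left₀ (theta₂_pos (mul_pos three_pos ht)).le (theta₂_three_mul_le ht) 4

lemma V2_mem_Icc (hq0 : 0 ≤ q) (hq1 : q < 1) : V2 q ∈ Set.Icc 0 q := by
  rcases hq0.eq_or_lt with rfl | hq
  · simp [V2]
  rw [V2_eq_theta₂SqRatio_sq hq hq1]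
  exact ⟨sq_nonneg _, (theta₂SqRatio_sq_le (neg_log_div_two_pos hq hq1)).trans_eq
    (exp_neg_two_mul_neg_log_div_two hq)⟩

lemma V2_zero : V2 0 = 0 := zero_mul _

lemma continuousWithinAt_V2_zero : ContinuousWithinAt V2 (Set.Ici 0) 0 := by
  have hbounds : ∀ᶠ x in 𝓝[≥] (0 : ℝ), V2 x ∈ Set.Icc 0 x := by
    filter_upwards [self_mem_nhdsWithin, nhdsWithin_le_nhds (eventually_lt_nhds one_pos)] with x
      hx0 hx1 using V2_mem_Icc hx0 hx1
  rw [ContinuousWithinAt, V2_zero]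
  exact tendsto_of_tendsto_of_tendsto_of_le_of_le' tendsto_const_nhds
    (tendsto_id.mono_left nhdsWithin_le_nhds) (hbounds.mono fun _ h => h.1)
    (hbounds.mono fun _ h => h.2)

lemma continuousOn_V2 : ContinuousOn V2 (Set.Ico 0 1) := by
  rintro x ⟨hx0, hx1⟩
  rcases hx0.eq_or_lt with rfl | hx
  · exact continuousWithinAt_V2_zero.mono fun y hy => hy.1
  · exact (hasDerivAt_V2 hx hx1).continuousAt.continuousWithinAt

lemma integral_U2 (hq0 : 0 ≤ q) (hq1 : q < 1) : ∫ t in (0 : ℝ)..q, U2 t = V2 q := by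
  have hcont : ContinuousOn V2 (Set.Icc 0 q) :=
    continuousOn_V2.mono fun x hx => ⟨hx.1, hx.2.trans_lt hq1⟩
  have hderiv : ∀ x ∈ Set.Ioo 0 q, HasDerivAt V2 (U2 x) x := fun x hx =>
    hasDerivAt_V2 hx.1 (hx.2.trans hq1)
  have hint := intervalIntegral.integrableOn_deriv_of_nonneg hcont hderiv fun x hx =>
    U2_nonneg hx.1.le (hx.2.trans hq1)
  rw [intervalIntegral.integral_eq_sub_of_hasDerivAt_of_le hq0 hcont hderiv
    ((intervalIntegrable_iff_integrableOn_Ioc_of_le hq0).2 hint), V2_zero, sub_zero]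

end Antiderivative

/-! ### Special values -/

lemma pi_div_sqrt_mul {n : ℝ} (hn : 0 < n) : π / √n * (n * (π / √n)) = π ^ 2 := by
  have hsq : √n ^ 2 = n := sq_sqrt hn.le
  field_simp
  rw [hsq]

lemma theta₃_sq_pi_div_sqrt {n : ℝ} (hn : 0 < n) :
    theta₃ (π / √n) ^ 2 = √n * theta₃ (n * (π / √n)) ^ 2 := by
  have hn' := sqrt_pos.2 hn
  have ht := div_pos pi_pos hn'
  refine mul_left_cancel₀ ht.ne' ((mul_theta₃_sq_of_mul_eq ht (pi_div_sqrt_mul hn)).trans ?_)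
  rw [← mul_assoc, div_mul_cancel₀ _ hn'.ne']

lemma theta₂_sq_pi_div_sqrt {n : ℝ} (hn : 0 < n) :
    theta₂ (π / √n) ^ 2 = √n * theta₄ (n * (π / √n)) ^ 2 := by
  have hn' := sqrt_pos.2 hn
  have ht := div_pos pi_pos hn'
  refine mul_left_cancel₀ ht.ne' ((mul_theta₂_sq_of_mul_eq ht (pi_div_sqrt_mul hn)).trans ?_)
  rw [← mul_assoc, div_mul_cancel₀ _ hn'.ne']

lemma V2_exp_neg_two_mul_pi_div_sqrt {n : ℝ} (hn : 0 < n) :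
    V2 (rexp (-2 * π / √n)) = theta₂SqRatio (π / √n) ^ 2 := by
  rw [mul_div_assoc, V2_exp_neg_two_mul (div_pos pi_pos (sqrt_pos.2 hn))]

lemma V2_exp_neg_two_mul_pi_div_sqrt_three :
    V2 (rexp (-2 * π / √3)) = (2 - √3) ^ 2 / 3 := by
  have ht : 0 < π / √3 := by positivity
  have hsq : √3 ^ 2 = 3 := sq_sqrt (by norm_num)
  rw [V2_exp_neg_two_mul_pi_div_sqrt three_pos]
  have hmult := one_sub_theta₂SqRatio_mul_theta₃_sq ht
  have h₃' := theta₃_pos (mul_pos three_pos ht)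
  set s := theta₂SqRatio (π / √3)
  have hs : (1 - s) * √3 = 1 + 3 * s := by
    rw [theta₃_sq_pi_div_sqrt three_pos] at hmult
    refine mul_right_cancel₀ (pow_pos h₃' 2).ne' ?_
    linear_combination hmult
  have hs' : s = (2 - √3) / √3 := by
    rw [eq_div_iff (by positivity)]
    linear_combination -(√3 - 1) / 2 * hs + (1 - s) / 2 * hsq
  rw [hs', div_pow, hsq]

lemma sqrtModulus_pow_eight_pi_div_sqrt_two :
    sqrtModulus (π / √2) ^ 8 = 4 * sqrtComplModulus (π / √2) ^ 4 := by
  have h₃ := theta₃_pos (t := π / √2) (by positivity)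
  have hsq : √2 ^ 2 = 2 := sq_sqrt (by norm_num)
  rw [sqrtModulus, sqrtComplModulus, div_pow, div_pow,
    show theta₂ (π / √2) ^ 8 = (theta₂ (π / √2) ^ 2) ^ 4 by ring, theta₂_sq_pi_div_sqrt two_pos,
    ← theta₃_mul_theta₄ (by positivity), mul_pow, show √2 ^ 4 = (√2 ^ 2) ^ 2 by ring, hsq]
  field_simp
  ring

lemma V2_exp_neg_two_mul_pi_div_sqrt_two :
    V2 (rexp (-2 * π / √2)) = (√6 - 2) ^ 2 / 18 := by
  have ht : 0 < π / √2 := by positivity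
  have hsq : √6 ^ 2 = 6 := sq_sqrt (by norm_num)
  rw [V2_exp_neg_two_mul_pi_div_sqrt two_pos]
  have hmod := sqrtModulus_pow_four_mul_theta₂SqRatio ht
  have hfixed := sqrtModulus_pow_eight_pi_div_sqrt_two
  have hcompl := sqrtModulus_pow_four_add ht
  have hs0 := theta₂SqRatio_pos ht
  have hs1 := theta₂SqRatio_lt_one_third ht
  set s := theta₂SqRatio (π / √2)
  set ρ := sqrtModulus (π / √2)
  set σ := sqrtComplModulus (π / √2)
  have hquartic : 64 * s ^ 2 = (1 - s ^ 2) * (1 - 9 * s ^ 2) ^ 3 := by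
    linear_combination
      ((1 - s) * (1 + 3 * s) ^ 3) ^ 2 * (hfixed / 4 + hcompl) -
      (ρ ^ 4 * ((1 - s) * (1 + 3 * s) ^ 3) / 4 + 4 * s + (1 - s) * (1 + 3 * s) ^ 3) * hmod
  have hfactor : ((9 * s ^ 2) ^ 2 - 10 * (9 * s ^ 2) + 1) *
      ((9 * s ^ 2 - 1) ^ 2 + 8) = 0 := by
    linear_combination -9 * hquartic
  have hquad := (mul_eq_zero.1 hfactor).resolve_right (by positivity)
  have hlin : (9 * s ^ 2 - 5 - 2 * √6) * (9 * s ^ 2 - 5 + 2 * √6) = 0 := by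
    linear_combination hquad - 4 * hsq
  have hroot : 9 * s ^ 2 - 5 - 2 * √6 ≠ 0 := by
    have hs_sq : s ^ 2 < 1 := by nlinarith
    have hsqrt : 0 < √6 := by positivity
    nlinarith
  linear_combination ((mul_eq_zero.1 hlin).resolve_left hroot) / 9 - hsq / 18

lemma three_mul_theta₂SqRatio_mul {t : ℝ} (ht : 0 < t) (h : t * (6 * t) = π ^ 2) :
    3 * theta₂SqRatio t * (theta₃ (3 * t) * theta₄ (3 * t)) = theta₃ t * theta₄ t := by
  have h3t := mul_pos three_pos ht
  have h₂ := theta₂_pos ht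
  have hinv := mul_theta₂_sq_of_mul_eq (s := 2 * (3 * t)) ht (by linarith)
  have hinv' := mul_theta₂_sq_of_mul_eq (s := 2 * t) h3t (by linarith)
  rw [theta₃_mul_theta₄ ht, theta₃_mul_theta₄ h3t, theta₂SqRatio]
  rw [mul_div_assoc', div_mul_eq_mul_div, div_eq_iff (pow_pos h₂ 2).ne']
  refine mul_left_cancel₀ pi_pos.ne' ?_
  linear_combination theta₂ t ^ 2 * hinv' - 3 * theta₂ (3 * t) ^ 2 * hinv

lemma V2_exp_neg_two_mul_pi_div_sqrt_six :
    V2 (rexp (-2 * π / √6)) = (√2 - 1) ^ 2 / 3 := by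
  have ht : 0 < π / √6 := by positivity
  have hsq : √2 ^ 2 = 2 := sq_sqrt (by norm_num)
  rw [V2_exp_neg_two_mul_pi_div_sqrt (by norm_num)]
  have hfixed := three_mul_theta₂SqRatio_mul ht (pi_div_sqrt_mul (by norm_num))
  have h₃ := one_sub_theta₂SqRatio_mul_theta₃_sq ht
  have h₄ := one_add_theta₂SqRatio_mul_theta₄_sq ht
  have h₃' := theta₃_pos (mul_pos three_pos ht)
  have h₄' := theta₄_pos (mul_pos three_pos ht)
  have hs0 := theta₂SqRatio_pos ht
  have hs1 := theta₂SqRatio_lt_one_third ht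
  set s := theta₂SqRatio (π / √6)
  have hquartic : 9 * s ^ 2 * (1 - s ^ 2) = 1 - 9 * s ^ 2 := by
    refine mul_right_cancel₀ (by positivity :
      (theta₃ (3 * (π / √6)) * theta₄ (3 * (π / √6))) ^ 2 ≠ 0) ?_
    linear_combination (1 - s ^ 2) * (3 * s * (theta₃ (3 * (π / √6)) * theta₄ (3 * (π / √6))) +
      theta₃ (π / √6) * theta₄ (π / √6)) * hfixed + (1 + s) * theta₄ (π / √6) ^ 2 * h₃ +
      (1 + 3 * s) * theta₃ (3 * (π / √6)) ^ 2 * h₄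
  have hlin : (3 * s ^ 2 - 3 - 2 * √2) * (3 * s ^ 2 - 3 + 2 * √2) = 0 := by
    linear_combination -hquartic - 4 * hsq
  have hroot : 3 * s ^ 2 - 3 - 2 * √2 ≠ 0 := by
    have hs_sq : s ^ 2 < 1 := by nlinarith
    have hsqrt : 0 < √2 := by positivity
    nlinarith
  linear_combination ((mul_eq_zero.1 hlin).resolve_left hroot) / 3 - hsq / 3

theorem stmt_2 :
    (∀ q : ℝ, 0 < q → q < 1 → (∫ t in (0:ℝ)..q, U2 t) = V2 q) ∧
    V2 (Real.exp (-2 * Real.pi / Real.sqrt 6)) = (Real.sqrt 2 - 1) ^ 2 / 3 ∧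
    V2 (Real.exp (-2 * Real.pi / Real.sqrt 3)) = (2 - Real.sqrt 3) ^ 2 / 3 ∧
    V2 (Real.exp (-2 * Real.pi / Real.sqrt 2)) = (Real.sqrt 6 - 2) ^ 2 / 18 :=
  ⟨fun _ hq0 hq1 => integral_U2 hq0.le hq1, V2_exp_neg_two_mul_pi_div_sqrt_six,
    V2_exp_neg_two_mul_pi_div_sqrt_three, V2_exp_neg_two_mul_pi_div_sqrt_two⟩
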